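/- arXiv:2512.20036 — 7 statements merged into one kernel-verified Lean document; each statement's English description precedes it below -/
import Mathlib

section
/- Let k be a fixed positive integer, let (a_i)_{i≥0} be a sequence of nonnegative real numbers, and let D ≥ 0. For each i ≥ 0 set A_i := max{a_i, a_{i+1}, …, a_{i+k}}. If a_{i+1+k} ≤ (1/8)·A_i + D for every i ≥ 0, then for every i ≥ k+1 one has A_i ≤ (1/8)^⌊i/(k+1)⌋ · max{A_0, A_1, …, A_k} + ((8+k)/7)·D. -/
/-!
Subtracting the fixed point `b = D / (1 - r)` of `x ↦ r x + D` and taking positive parts turns the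
recursion into the homogeneous one `u_{i+1+k} ≤ r U_i`, where `u_i = (a_i - b)⁺` and `U_i` is the
maximum of `u` over `i, …, i + k`. Since `0 ≤ r < 1`, a term entering the window never exceeds the
current maximum, so `U` is antitone. After `k + 1` steps every term of the window has been replaced
by one that gained a factor `r`, whence `U_{i+k+1} ≤ r U_i`.
-/

open Finset

section Window

variable {α : Type*} [SemilatticeSup α] {k : ℕ} {a : ℕ → α}

/-- The supremum of `a` over the window `i, i + 1, …, i + k`, which has `k + 1` terms. For a real
sequence this is the quantity `A_i` of the iteration lemma. -/
def windowSup (k : ℕ) (a : ℕ → α) (i : ℕ) : α :=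
  (range (k + 1)).sup' nonempty_range_add_one fun j => a (i + j)

theorem windowSup_le_iff {i : ℕ} {c : α} : windowSup k a i ≤ c ↔ ∀ j ≤ k, a (i + j) ≤ c := by
  simp only [windowSup, sup'_le_iff, mem_range, Nat.lt_succ_iff]

theorem le_windowSup (a : ℕ → α) (i : ℕ) {j : ℕ} (hj : j ≤ k) : a (i + j) ≤ windowSup k a i :=
  windowSup_le_iff.1 le_rfl j hj

theorem windowSup_comp_of_monotone {β γ : Type*} [LinearOrder β] [SemilatticeSup γ] {f : β → γ}
    (hf : Monotone f) (k : ℕ) (a : ℕ → β) (i : ℕ) :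
    windowSup k (f ∘ a) i = f (windowSup k a i) :=
  (apply_sup'_eq_sup'_comp _ f hf.map_sup).symm

theorem antitone_windowSup (h : ∀ i, a (i + 1 + k) ≤ windowSup k a i) :
    Antitone (windowSup k a) := by
  refine antitone_nat_of_succ_le fun i => windowSup_le_iff.2 fun j hj => ?_
  obtain rfl | hjk := hj.eq_or_lt
  · exact h i
  · simpa only [add_assoc, add_comm 1 j] using le_windowSup a i hjk

end Window

section HomogeneousRecursion

variable {R : Type*} [Semiring R] [SemilatticeSup R] [IsOrderedRing R] {k : ℕ} {u : ℕ → R} {r : R}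

theorem antitone_windowSup_of_le_mul (hu : ∀ i, 0 ≤ u i) (hr : r ≤ 1)
    (h : ∀ i, u (i + 1 + k) ≤ r * windowSup k u i) : Antitone (windowSup k u) := by
  refine antitone_windowSup fun i => (h i).trans (mul_le_of_le_one_left ?_ hr)
  exact (hu i).trans (le_windowSup u i k.zero_le)

theorem windowSup_add_le_mul (hu : ∀ i, 0 ≤ u i) (hr₀ : 0 ≤ r) (hr₁ : r ≤ 1)
    (h : ∀ i, u (i + 1 + k) ≤ r * windowSup k u i) (i : ℕ) :
    windowSup k u (i + (k + 1)) ≤ r * windowSup k u i := by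
  refine windowSup_le_iff.2 fun j _ => ?_
  calc u (i + (k + 1) + j) = u (i + j + 1 + k) := by congr 1; omega
    _ ≤ r * windowSup k u (i + j) := h (i + j)
    _ ≤ r * windowSup k u i := by
      gcongr
      exact antitone_windowSup_of_le_mul hu hr₁ h (i.le_add_right j)

theorem windowSup_mul_le_pow_mul (hu : ∀ i, 0 ≤ u i) (hr₀ : 0 ≤ r) (hr₁ : r ≤ 1)
    (h : ∀ i, u (i + 1 + k) ≤ r * windowSup k u i) (n : ℕ) :
    windowSup k u (n * (k + 1)) ≤ r ^ n * windowSup k u 0 := by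
  induction n with
  | zero => simp
  | succ n ih =>
    calc windowSup k u ((n + 1) * (k + 1)) = windowSup k u (n * (k + 1) + (k + 1)) := by
          rw [add_one_mul]
      _ ≤ r * windowSup k u (n * (k + 1)) := windowSup_add_le_mul hu hr₀ hr₁ h _
      _ ≤ r * (r ^ n * windowSup k u 0) := by gcongr
      _ = r ^ (n + 1) * windowSup k u 0 := by rw [pow_succ', mul_assoc]

theorem windowSup_le_pow_div_mul (hu : ∀ i, 0 ≤ u i) (hr₀ : 0 ≤ r) (hr₁ : r ≤ 1)
    (h : ∀ i, u (i + 1 + k) ≤ r * windowSup k u i) (i : ℕ) :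
    windowSup k u i ≤ r ^ (i / (k + 1)) * windowSup k u 0 :=
  (antitone_windowSup_of_le_mul hu hr₁ h (Nat.div_mul_le_self i (k + 1))).trans
    (windowSup_mul_le_pow_mul hu hr₀ hr₁ h _)

end HomogeneousRecursion

section AffineRecursion

variable {R : Type*} [Field R] [LinearOrder R] [IsStrictOrderedRing R] {r : R}

theorem posPart_sub_fixed_point_le_mul {D x y : R} (hr₀ : 0 ≤ r) (hr₁ : r ≠ 1)
    (h : x ≤ r * y + D) : (x - D / (1 - r))⁺ ≤ r * (y - D / (1 - r))⁺ := by
  have one_sub_ne_zero : 1 - r ≠ 0 := sub_ne_zero.2 hr₁.symm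
  have fixed_point : r * (D / (1 - r)) + D = D / (1 - r) := by
    field_simp
    ring
  refine sup_le ?_ (mul_nonneg hr₀ (posPart_nonneg _))
  calc x - D / (1 - r) ≤ r * (y - D / (1 - r)) := by linarith only [h, fixed_point]
    _ ≤ r * (y - D / (1 - r))⁺ := by gcongr; exact le_posPart _

theorem iteration_lemma_general {k : ℕ} {a : ℕ → R} {D : R} (hr₀ : 0 ≤ r) (hr₁ : r < 1)
    (hrec : ∀ i, a (i + 1 + k) ≤ r * windowSup k a i + D) (i : ℕ) :
    windowSup k a i ≤
      r ^ (i / (k + 1)) * (windowSup k a 0 - D / (1 - r))⁺ + D / (1 - r) := by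
  let excess (x : R) : R := (x - D / (1 - r))⁺
  have excess_mono : Monotone excess := fun _ _ hxy => posPart_mono (sub_le_sub_right hxy _)
  have decay : windowSup k (excess ∘ a) i ≤ r ^ (i / (k + 1)) * windowSup k (excess ∘ a) 0 := by
    refine windowSup_le_pow_div_mul (fun _ => posPart_nonneg _) hr₀ hr₁.le (fun j => ?_) i
    rw [windowSup_comp_of_monotone excess_mono]
    exact posPart_sub_fixed_point_le_mul hr₀ hr₁.ne (hrec j)
  simp only [windowSup_comp_of_monotone excess_mono] at decay
  exact sub_le_iff_le_add.1 ((le_posPart _).trans decay)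

end AffineRecursion

/-- **Iteration lemma.** If `a_{i+1+k} ≤ (1/8) A_i + D` where
`A_i = max {a_i, …, a_{i+k}}`, then
`A_i ≤ (1/8)^⌊i/(k+1)⌋ max{A_0,…,A_k} + ((8+k)/7) D` for all `i ≥ k+1`. -/
theorem iteration_lemma (k : ℕ) (hk : 0 < k) (a : ℕ → ℝ) (ha : ∀ i, 0 ≤ a i)
    (D : ℝ) (hD : 0 ≤ D) (A : ℕ → ℝ)
    (hA : ∀ i, A i = (Finset.range (k + 1)).sup' ⟨0, by simp⟩ (fun j => a (i + j)))
    (hrec : ∀ i, a (i + 1 + k) ≤ (1 / 8) * A i + D) :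
    ∀ i, k + 1 ≤ i →
      A i ≤ (1 / 8 : ℝ) ^ (i / (k + 1)) *
          ((Finset.range (k + 1)).sup' ⟨0, by simp⟩ A) + ((8 + (k : ℝ)) / 7) * D := by
  intro i _
  obtain rfl : A = windowSup k a := funext hA
  have initial_nonneg : 0 ≤ windowSup k a 0 := (ha 0).trans (le_windowSup a 0 k.zero_le)
  have initial_le : windowSup k a 0 ≤ (range (k + 1)).sup' ⟨0, by simp⟩ (windowSup k a) :=
    le_sup' _ (mem_range.2 k.succ_pos)
  have excess_le : (windowSup k a 0 - 8 / 7 * D)⁺ ≤ windowSup k a 0 :=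
    sup_le (sub_le_self _ (by positivity)) initial_nonneg
  have fixed_point_eq : D / (1 - 1 / 8) = 8 / 7 * D := by ring
  calc windowSup k a i
      ≤ (1 / 8) ^ (i / (k + 1)) * (windowSup k a 0 - 8 / 7 * D)⁺ + 8 / 7 * D :=
        fixed_point_eq ▸ iteration_lemma_general (by norm_num) (by norm_num) hrec i
    _ ≤ _ := by
      gcongr
      · exact excess_le.trans initial_le
      · exact le_add_of_nonneg_right k.cast_nonneg
end

section
/- Along any characteristic curve of the Taylor–Couette transport field, the quantity (1 − X(s))·V_φ(s) − (α/(2η₁))·(1 − X(s))² is constant in s. Consequently, if X(t) = η and V_φ(t) = v_φ for some t in the interval, then for all s in the interval V_φ(s) = (1−η)/(1−X(s))·v_φ + (α/(2η₁))·(1−X(s)) − (α/(2η₁))·(1−η)²/(1−X(s)). -/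
open Set

/-!
Write `r = 1 - X` and `c = α / (2 η₁)`. Multiplied by `r`, the equation for `Vφ` says
`(r Vφ)' = 2 c r r' = (c r ^ 2)'`, so `r Vφ - c r ^ 2` has zero derivative.
-/

theorem eq_of_hasDerivWithinAt_zero {𝕜 E : Type*} [RCLike 𝕜] [NormedAddCommGroup E]
    [NormedSpace 𝕜 E] {f : 𝕜 → E} {S : Set 𝕜} (hS : Convex ℝ S)
    (hf : ∀ x ∈ S, HasDerivWithinAt f 0 S x) {x y : 𝕜} (hx : x ∈ S) (hy : y ∈ S) :
    f x = f y := by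
  have hbound : ‖f x - f y‖ ≤ 0 * ‖x - y‖ :=
    hS.norm_image_sub_le_of_norm_hasDerivWithin_le hf (fun _ _ => norm_zero.le) hy hx
  rw [zero_mul] at hbound
  exact sub_eq_zero.mp (norm_le_zero_iff.mp hbound)

theorem hasDerivWithinAt_mul_sub_mul_sq_zero {𝕜 : Type*} [NontriviallyNormedField 𝕜]
    {r u : 𝕜 → 𝕜} {S : Set 𝕜} {s r' c : 𝕜} (hs : r s ≠ 0) (hr : HasDerivWithinAt r r' S s)
    (hu : HasDerivWithinAt u (2 * c * r' - r' * u s / r s) S s) :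
    HasDerivWithinAt (fun x => r x * u x - c * r x ^ 2) 0 S s := by
  refine ((hr.mul hu).sub ((hr.pow 2).const_mul c)).congr_deriv ?_
  field_simp
  ring

theorem eq_of_mul_sub_mul_sq_eq {K : Type*} [Field K] {c r u r₀ u₀ : K} (hr : r ≠ 0)
    (h : r * u - c * r ^ 2 = r₀ * u₀ - c * r₀ ^ 2) :
    u = r₀ / r * u₀ + c * r - c * r₀ ^ 2 / r := by
  field_simp
  linear_combination h

theorem angular_momentum_invariant_general (c : ℝ) {I : Set ℝ} (hI : I.OrdConnected)
    {X Vη Vφ : ℝ → ℝ} (hX1 : ∀ s ∈ I, X s ≠ 1)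
    (hX : ∀ s ∈ I, HasDerivWithinAt X (Vη s) I s)
    (hVφ : ∀ s ∈ I, HasDerivWithinAt Vφ (Vη s * Vφ s / (1 - X s) - 2 * c * Vη s) I s) :
    (∀ s ∈ I, ∀ t ∈ I,
        (1 - X s) * Vφ s - c * (1 - X s) ^ 2 = (1 - X t) * Vφ t - c * (1 - X t) ^ 2)
    ∧ ∀ t ∈ I, ∀ η vφ : ℝ, X t = η → Vφ t = vφ → ∀ s ∈ I,
        Vφ s = (1 - η) / (1 - X s) * vφ + c * (1 - X s) - c * (1 - η) ^ 2 / (1 - X s) := by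
  have radius_ne_zero : ∀ s ∈ I, 1 - X s ≠ 0 := fun s hs => sub_ne_zero.mpr (hX1 s hs).symm
  have deriv_zero : ∀ s ∈ I,
      HasDerivWithinAt (fun x => (1 - X x) * Vφ x - c * (1 - X x) ^ 2) 0 I s := fun s hs =>
    hasDerivWithinAt_mul_sub_mul_sq_zero (radius_ne_zero s hs) ((hX s hs).const_sub 1)
      ((hVφ s hs).congr_deriv (by ring))
  have invariant : ∀ s ∈ I, ∀ t ∈ I,
      (1 - X s) * Vφ s - c * (1 - X s) ^ 2 = (1 - X t) * Vφ t - c * (1 - X t) ^ 2 :=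
    fun s hs t ht => eq_of_hasDerivWithinAt_zero hI.convex deriv_zero hs ht
  refine ⟨invariant, ?_⟩
  rintro t ht _ _ rfl rfl s hs
  exact eq_of_mul_sub_mul_sq_eq (radius_ne_zero s hs) (invariant s hs t ht)

/-- Along any characteristic curve of the Taylor–Couette transport field, the
quantity `(1 − X(s)) V_φ(s) − (α/(2η₁)) (1 − X(s))²` is constant; consequently,
if `X(t) = η` and `V_φ(t) = v_φ`, then
`V_φ(s) = (1−η)/(1−X(s)) v_φ + (α/(2η₁))(1−X(s)) − (α/(2η₁))(1−η)²/(1−X(s))`. -/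
theorem angular_momentum_invariant
    (α η₁ : ℝ) (hα : 0 < α) (hη₁ : 0 < η₁) (hη₁' : η₁ < 1)
    (I : Set ℝ) (hI : I.OrdConnected)
    (X Vη Vφ Vz : ℝ → ℝ)
    (hX1 : ∀ s ∈ I, X s < 1)
    (hX : ∀ s ∈ I, HasDerivAt X (Vη s) s)
    (hVη : ∀ s ∈ I, HasDerivAt Vη (-(Vφ s) ^ 2 / (1 - X s)) s)
    (hVφ : ∀ s ∈ I, HasDerivAt Vφ (Vη s * Vφ s / (1 - X s) - α / η₁ * Vη s) s)
    (hVz : ∀ s ∈ I, HasDerivAt Vz 0 s) :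
    (∀ s ∈ I, ∀ t ∈ I,
        (1 - X s) * Vφ s - α / (2 * η₁) * (1 - X s) ^ 2
          = (1 - X t) * Vφ t - α / (2 * η₁) * (1 - X t) ^ 2)
    ∧ ∀ t ∈ I, ∀ η vφ : ℝ, X t = η → Vφ t = vφ → ∀ s ∈ I,
        Vφ s = (1 - η) / (1 - X s) * vφ + α / (2 * η₁) * (1 - X s)
          - α / (2 * η₁) * (1 - η) ^ 2 / (1 - X s) := by
  rw [show α / η₁ = 2 * (α / (2 * η₁)) by ring] at hVφ
  exact angular_momentum_invariant_general _ hI (fun s hs => (hX1 s hs).ne)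
    (fun s hs => (hX s hs).hasDerivWithinAt) (fun s hs => (hVφ s hs).hasDerivWithinAt)
end

section
/- Fix α > 0, η₁ ∈ (0,1), η ∈ [0,1) and v_φ ∈ ℝ, and define Φ(y) := (1−η)/(1−y)·v_φ + (α/(2η₁))·(1−y) − (α/(2η₁))·(1−η)²/(1−y) for y ∈ [η,1). If (1−η)·v_φ ≠ (α/(2η₁))·(1−η)², then the improper integral ∫_{η}^{1} (2/(1−y))·Φ(y)² dy diverges to +∞, and consequently for every v_η ∈ ℝ there exists η₊ ∈ [η, 1) such that v_η² = ∫_{η}^{η₊} (2/(1−y))·Φ(y)² dy. -/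
open Set MeasureTheory Filter

/-!
With `k = α / (2 η₁)` and `c = (1 - η) v_φ - k (1 - η)²` one has `Φ y = c / (1 - y) + k (1 - y)`, so
`(1 - y) Φ y → c ≠ 0` and `Φ` is bounded away from zero near `1`. The weight `2 / (1 - y)` alone
then makes the nonnegative integrand non-integrable at `1`, so its primitive is unbounded, and the
intermediate value theorem gives the turning point.
-/

open Asymptotics
open scoped Topology

section ImproperIntegral

variable {a b : ℝ}

theorem not_intervalIntegrable_of_sub_inv_isBigO_nhdsLT {E : Type*} [NormedAddCommGroup E]
    {f : ℝ → E} (hab : a < b) (hf : (fun x => (x - b)⁻¹) =O[𝓝[<] b] f) :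
    ¬IntervalIntegrable f volume a b := by
  have hderiv : ∀ᶠ x in 𝓝[<] b, HasDerivAt (fun x => Real.log (x - b)) (x - b)⁻¹ x := by
    filter_upwards [self_mem_nhdsWithin] with x hx
    simpa using ((hasDerivAt_id x).sub_const b).log (sub_ne_zero.2 (ne_of_lt hx))
  have hlog : Tendsto (fun x => ‖Real.log (x - b)‖) (𝓝[<] b) atTop := by
    refine tendsto_abs_atBot_atTop.comp (Real.tendsto_log_nhdsNE_zero.comp ?_)
    rw [← sub_self b]
    exact (((hasDerivAt_id b).sub_const b).tendsto_nhdsNE one_ne_zero).mono_left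
      (nhdsLT_le_nhdsNE b)
  have hIcc : uIcc a b ∈ 𝓝[<] b := by
    rw [uIcc_of_le hab.le]
    exact Icc_mem_nhdsLT hab
  exact not_intervalIntegrable_of_tendsto_norm_atTop_of_deriv_isBigO_filter (𝓝[<] b) hIcc
    (hderiv.mono fun x hx => hx.differentiableAt) hlog
    (hf.congr' (hderiv.mono fun x hx => hx.deriv.symm) .rfl)

variable {μ : Measure ℝ} [NullSingletonClass μ] {f : ℝ → ℝ}

theorem tendsto_intervalIntegral_atTop_of_not_intervalIntegrable (hab : a < b)
    (hfi : ∀ x ∈ Ico a b, IntervalIntegrable f μ a x) (hf : ∀ x ∈ Ioo a b, 0 ≤ f x)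
    (hdiv : ¬IntervalIntegrable f μ a b) :
    Tendsto (fun x => ∫ y in a..x, f y ∂μ) (𝓝[<] b) atTop := by
  refine tendsto_atTop.2 fun C => ?_
  by_contra hC
  have hbound : ∀ x ∈ Ioo a b, ∫ y in a..x, f y ∂μ ≤ C := by
    intro x hx
    obtain ⟨z, hzC, hxz, hzb⟩ :=
      ((not_eventually.1 hC).and_eventually (Ioo_mem_nhdsLT hx.2)).exists
    have hnonneg : 0 ≤ᵐ[μ.restrict (Ioc a z)] f := by
      filter_upwards [ae_restrict_mem measurableSet_Ioc] with y hy
      exact hf y ⟨hy.1, hy.2.trans_lt hzb⟩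
    exact (intervalIntegral.integral_mono_interval le_rfl hx.1.le hxz.le hnonneg
      (hfi z ⟨(hx.1.trans hxz).le, hzb⟩)).trans (not_le.1 hzC).le
  obtain ⟨u, -, hu, hub⟩ := exists_seq_strictMono_tendsto' hab
  have hrestrict : ∀ n, (μ.restrict (Ioo a b)).restrict (Ioc a (u n)) = μ.restrict (Ioc a (u n)) :=
    fun n => Measure.restrict_restrict_of_subset (Ioc_subset_Ioo_right (hu n).2)
  refine hdiv ((intervalIntegrable_iff_integrableOn_Ioo_of_le hab.le).2
    ((aecover_Ioo_of_Ioc tendsto_const_nhds hub).integrable_of_integral_bounded_of_nonneg_ae C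
      (fun n => ?_) (ae_restrict_of_forall_mem measurableSet_Ioo hf) (.of_forall fun n => ?_)))
  · rw [IntegrableOn, hrestrict]
    exact (hfi (u n) ⟨(hu n).1.le, (hu n).2⟩).1
  · rw [hrestrict, ← intervalIntegral.integral_of_le (hu n).1.le]
    exact hbound (u n) (hu n)

theorem exists_intervalIntegral_eq_of_tendsto_atTop (hab : a < b)
    (hfi : ∀ x ∈ Ico a b, IntervalIntegrable f μ a x)
    (hf : Tendsto (fun x => ∫ y in a..x, f y ∂μ) (𝓝[<] b) atTop) {t : ℝ} (ht : 0 ≤ t) :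
    ∃ x ∈ Ico a b, ∫ y in a..x, f y ∂μ = t := by
  obtain ⟨z, htz, haz, hzb⟩ :=
    ((hf.eventually_ge_atTop t).and (Ioo_mem_nhdsLT hab)).exists
  have hcont : ContinuousOn (fun x => ∫ y in a..x, f y ∂μ) (Icc a z) := by
    simpa only [uIcc_of_le haz.le] using
      intervalIntegral.continuousOn_primitive_interval' (hfi z ⟨haz.le, hzb⟩) left_mem_uIcc
  obtain ⟨x, hx, hxt⟩ := intermediate_value_Icc haz.le hcont
    ⟨intervalIntegral.integral_same.trans_le ht, htz⟩
  exact ⟨x, ⟨hx.1, hx.2.trans_lt hzb⟩, hxt⟩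

end ImproperIntegral

section TurningPoint

variable {Φ : ℝ → ℝ} {a b : ℝ}

theorem intervalIntegrable_two_div_sub_mul_sq (hcont : ContinuousOn Φ (Ico a b)) {x : ℝ}
    (hx : x ∈ Ico a b) : IntervalIntegrable (fun y => 2 / (b - y) * Φ y ^ 2) volume a x := by
  have hsub : uIcc a x ⊆ Ico a b := by
    rw [uIcc_of_le hx.1]
    exact Icc_subset_Ico_right hx.2
  have hne : ∀ y ∈ uIcc a x, b - y ≠ 0 := fun y hy => (sub_pos.2 (hsub hy).2).ne'
  have hweight : ContinuousOn (fun y => 2 / (b - y)) (uIcc a x) :=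
    continuousOn_const.div (by fun_prop) hne
  exact (hweight.mul ((hcont.mono hsub).pow 2)).intervalIntegrable

theorem sub_inv_isBigO_two_div_sub_mul_sq {l : Filter ℝ} (hΦ : (fun _ => (1 : ℝ)) =O[l] Φ) :
    (fun y => (y - b)⁻¹) =O[l] fun y => 2 / (b - y) * Φ y ^ 2 := by
  have hweight : (fun y => (y - b)⁻¹) =O[l] fun y => 2 / (b - y) := by
    refine .of_bound 1 (.of_forall fun y => ?_)
    rw [norm_inv, norm_div, norm_sub_rev, one_mul, inv_eq_one_div]
    gcongr
    norm_num
  simpa using hweight.mul (hΦ.pow 2)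

theorem tendsto_intervalIntegral_two_div_sub_mul_sq (hab : a < b) (hcont : ContinuousOn Φ (Ico a b))
    (hΦ : (fun _ => (1 : ℝ)) =O[𝓝[<] b] Φ) :
    Tendsto (fun x => ∫ y in a..x, 2 / (b - y) * Φ y ^ 2) (𝓝[<] b) atTop := by
  refine tendsto_intervalIntegral_atTop_of_not_intervalIntegrable hab
    (fun _ => intervalIntegrable_two_div_sub_mul_sq hcont) (fun y hy => ?_)
    (not_intervalIntegrable_of_sub_inv_isBigO_nhdsLT hab (sub_inv_isBigO_two_div_sub_mul_sq hΦ))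
  have : 0 < b - y := sub_pos.2 hy.2
  positivity

theorem turning_point_exists_general (hab : a < b) (hcont : ContinuousOn Φ (Ico a b))
    (hΦ : (fun _ => (1 : ℝ)) =O[𝓝[<] b] Φ) :
    Tendsto (fun x => ∫ y in a..x, 2 / (b - y) * Φ y ^ 2) (𝓝[<] b) atTop ∧
      ∀ v : ℝ, ∃ x, a ≤ x ∧ x < b ∧ v ^ 2 = ∫ y in a..x, 2 / (b - y) * Φ y ^ 2 := by
  have hdiv := tendsto_intervalIntegral_two_div_sub_mul_sq hab hcont hΦ
  refine ⟨hdiv, fun v => ?_⟩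
  obtain ⟨x, ⟨hax, hxb⟩, hxv⟩ := exists_intervalIntegral_eq_of_tendsto_atTop hab
    (fun _ => intervalIntegrable_two_div_sub_mul_sq hcont) hdiv (sq_nonneg v)
  exact ⟨x, hax, hxb, hxv.symm⟩

end TurningPoint

/-- The angular velocity `Φ` transported along a characteristic that starts at radial position `η`
with angular velocity `v`. The parameter `k` stands for the combination `α / (2 η₁)` of shear
strength and channel width. At `y = 1` the quotients take the value `0`. -/
noncomputable def transportedAngularVelocity (k η v y : ℝ) : ℝ :=
  (1 - η) / (1 - y) * v + k * (1 - y) - k * (1 - η) ^ 2 / (1 - y)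

section TransportedAngularVelocity

variable {k η v : ℝ}

theorem continuousOn_transportedAngularVelocity :
    ContinuousOn (transportedAngularVelocity k η v) (Iio 1) := by
  have hne : ∀ y ∈ Iio (1 : ℝ), 1 - y ≠ 0 := fun y hy => (sub_pos.2 hy).ne'
  unfold transportedAngularVelocity
  fun_prop (disch := assumption)

theorem tendsto_one_sub_mul_transportedAngularVelocity :
    Tendsto (fun y => (1 - y) * transportedAngularVelocity k η v y) (𝓝[<] 1)
      (𝓝 ((1 - η) * v - k * (1 - η) ^ 2)) := by
  have hcont : Continuous fun y : ℝ => (1 - η) * v - k * (1 - η) ^ 2 + k * (1 - y) ^ 2 := by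
    fun_prop
  have hlim := (hcont.tendsto 1).mono_left (nhdsWithin_le_nhds (s := Iio 1))
  rw [sub_self, zero_pow two_ne_zero, mul_zero, add_zero] at hlim
  refine hlim.congr' ?_
  filter_upwards [self_mem_nhdsWithin] with y hy
  have : 1 - y ≠ 0 := (sub_pos.2 hy).ne'
  unfold transportedAngularVelocity
  field_simp
  ring

theorem one_isBigO_transportedAngularVelocity (hne : (1 - η) * v ≠ k * (1 - η) ^ 2) :
    (fun _ => (1 : ℝ)) =O[𝓝[<] 1] transportedAngularVelocity k η v := by
  have hc : (1 - η) * v - k * (1 - η) ^ 2 ≠ 0 := sub_ne_zero.2 hne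
  have hfactor : (fun y : ℝ => 1 - y) =O[𝓝[<] 1] fun _ => (1 : ℝ) :=
    ((continuous_sub_left (1 : ℝ)).tendsto 1 |>.mono_left nhdsWithin_le_nhds).isBigO_one ℝ
  calc (fun _ => (1 : ℝ))
      =O[𝓝[<] 1] fun _ => (1 - η) * v - k * (1 - η) ^ 2 := isBigO_const_const 1 hc _
    _ =O[𝓝[<] 1] fun y => (1 - y) * transportedAngularVelocity k η v y :=
      ((isEquivalent_const_iff_tendsto hc).2
        tendsto_one_sub_mul_transportedAngularVelocity).symm.isBigO
    _ =O[𝓝[<] 1] transportedAngularVelocity k η v := by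
      simpa only [one_mul] using hfactor.mul (isBigO_refl (transportedAngularVelocity k η v) _)

end TransportedAngularVelocity

/-- If `(1−η) v_φ ≠ (α/(2η₁)) (1−η)²`, the improper integral
`∫_η^1 (2/(1−y)) Φ(y)² dy` of the transported angular velocity diverges to `+∞`,
so for every `v_η` there is a turning point `η₊ ∈ [η,1)` with
`v_η² = ∫_η^{η₊} (2/(1−y)) Φ(y)² dy`. -/
theorem turning_point_exists
    (α η₁ η vφ : ℝ) (hα : 0 < α) (hη₁ : 0 < η₁) (hη₁' : η₁ < 1)
    (hη : 0 ≤ η) (hη' : η < 1)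
    (Φ : ℝ → ℝ)
    (hΦ : ∀ y, Φ y = (1 - η) / (1 - y) * vφ + α / (2 * η₁) * (1 - y)
        - α / (2 * η₁) * (1 - η) ^ 2 / (1 - y))
    (hne : (1 - η) * vφ ≠ α / (2 * η₁) * (1 - η) ^ 2) :
    Tendsto (fun b => ∫ y in η..b, 2 / (1 - y) * (Φ y) ^ 2)
        (nhdsWithin 1 (Set.Iio 1)) atTop
    ∧ ∀ vη : ℝ, ∃ ηp, η ≤ ηp ∧ ηp < 1 ∧
        vη ^ 2 = ∫ y in η..ηp, 2 / (1 - y) * (Φ y) ^ 2 := by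
  obtain rfl : Φ = transportedAngularVelocity (α / (2 * η₁)) η vφ := funext hΦ
  exact turning_point_exists_general hη' (continuousOn_transportedAngularVelocity.mono
    Ico_subset_Iio_self) (one_isBigO_transportedAngularVelocity hne)
end

section
/- Let X, V_η, V_φ, V_z be a characteristic curve of the Taylor–Couette transport field on an interval I. If s₀, s₁ ∈ I satisfy X(s₀) = X(s₁) (the radial position returns to its initial value), then V_φ(s₁) = V_φ(s₀) and V_η(s₁)² = V_η(s₀)²; that is, the angular velocity is restored and the radial speed is preserved at the return. -/
open Set

/-!
A quantity whose rate of change along a curve is `f (X s) * X' s` depends on the position `X s`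
only, by change of variables in the integral; hence it is restored whenever the position is. The
angular momentum `(1 - X) * Vφ` is of this kind. It makes `Vφ` a function of `X`, so `Vη'` is a
function of `X` as well, that is, the radial motion is driven by an effective potential. As
`X' = Vη`, the rate of `Vη ^ 2` is again of the above form.
-/

theorem sub_eq_integral_of_hasDerivWithinAt_comp_mul {I : Set ℝ} (hI : I.OrdConnected)
    {X X' f G : ℝ → ℝ} (hX : ∀ s ∈ I, HasDerivWithinAt X (X' s) I s) (hX' : ContinuousOn X' I)
    (hf : ContinuousOn f (X '' I))
    (hG : ∀ s ∈ I, HasDerivWithinAt G (f (X s) * X' s) I s) {s t : ℝ} (hs : s ∈ I) (ht : t ∈ I) :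
    G t - G s = ∫ x in X s..X t, f x := by
  have hst : uIcc s t ⊆ I := hI.uIcc_subset hs ht
  have right_deriv {g g' : ℝ → ℝ} (hg : ∀ r ∈ I, HasDerivWithinAt g (g' r) I r) :
      ∀ r ∈ Ioo (min s t) (max s t), HasDerivWithinAt g (g' r) (Ioi r) r := fun r hr =>
    ((hg r (hst (Ioo_subset_Icc_self hr))).hasDerivAt
      (Filter.mem_of_superset (Icc_mem_nhds hr.1 hr.2) hst)).hasDerivWithinAt
  have hXc : ContinuousOn X I := fun r hr => (hX r hr).continuousWithinAt
  have hGc : ContinuousOn G I := fun r hr => (hG r hr).continuousWithinAt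
  have hrate : ContinuousOn (fun r => f (X r) * X' r) (uIcc s t) :=
    ((hf.comp hXc (mapsTo_image X I)).mul hX').mono hst
  calc
    G t - G s = ∫ r in s..t, f (X r) * X' r :=
      (intervalIntegral.integral_eq_sub_of_hasDeriv_right (hGc.mono hst) (right_deriv hG)
        hrate.intervalIntegrable).symm
    _ = ∫ x in X s..X t, f x :=
      intervalIntegral.integral_comp_mul_deriv'' (hXc.mono hst) (right_deriv hX) (hX'.mono hst)
        (hf.mono (image_mono hst))

/-- A characteristic curve on `I` of the transport field with shear profile `b`, a function of the
radial position; the Taylor–Couette field has the constant profile `α / η₁`. The velocity component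
`Vz`, decoupled from the others, is left out. Derivatives are taken within `I`, so they are
one-sided at those endpoints that belong to `I`. -/
structure IsCharacteristicCurve (b : ℝ → ℝ) (I : Set ℝ) (X Vη Vφ : ℝ → ℝ) : Prop where
  ne_one : ∀ s ∈ I, X s ≠ 1
  hasDerivWithinAt_position : ∀ s ∈ I, HasDerivWithinAt X (Vη s) I s
  hasDerivWithinAt_radial : ∀ s ∈ I, HasDerivWithinAt Vη (-(Vφ s) ^ 2 / (1 - X s)) I s
  hasDerivWithinAt_angular :
    ∀ s ∈ I, HasDerivWithinAt Vφ (Vη s * Vφ s / (1 - X s) - b (X s) * Vη s) I s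

/-- The angular velocity at radial position `x` on a characteristic curve with shear profile `b`
that passes through position `x₀` with angular velocity `v₀`: the angular momentum at `x`, divided
by the signed distance `1 - x` to the axis. -/
noncomputable def angularVelocityAt (b : ℝ → ℝ) (x₀ v₀ x : ℝ) : ℝ :=
  ((1 - x₀) * v₀ - ∫ y in x₀..x, (1 - y) * b y) / (1 - x)

theorem continuousOn_angularVelocityAt {b : ℝ → ℝ} (hb : Continuous b) (x₀ v₀ : ℝ) :
    ContinuousOn (angularVelocityAt b x₀ v₀) {1}ᶜ := by
  have hprimitive : Continuous fun x => ∫ y in x₀..x, (1 - y) * b y :=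
    intervalIntegral.continuous_primitive
      (fun u v => ((continuous_const.sub continuous_id).mul hb).intervalIntegrable u v) x₀
  exact (continuous_const.sub hprimitive).continuousOn.div
    (continuous_const.sub continuous_id).continuousOn fun x hx => sub_ne_zero.2 (Ne.symm hx)

namespace IsCharacteristicCurve

variable {b : ℝ → ℝ} {I : Set ℝ} {X Vη Vφ : ℝ → ℝ} {s t : ℝ}

theorem one_sub_ne_zero (h : IsCharacteristicCurve b I X Vη Vφ) (hs : s ∈ I) : 1 - X s ≠ 0 :=
  sub_ne_zero.2 (h.ne_one s hs).symm

theorem continuousOn_radial (h : IsCharacteristicCurve b I X Vη Vφ) : ContinuousOn Vη I :=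
  fun s hs => (h.hasDerivWithinAt_radial s hs).continuousWithinAt

theorem hasDerivWithinAt_angularMomentum (h : IsCharacteristicCurve b I X Vη Vφ) (hs : s ∈ I) :
    HasDerivWithinAt (fun r => (1 - X r) * Vφ r) (-((1 - X s) * b (X s)) * Vη s) I s := by
  have hne := h.one_sub_ne_zero hs
  refine (((h.hasDerivWithinAt_position s hs).const_sub 1).mul
    (h.hasDerivWithinAt_angular s hs)).congr_deriv ?_
  field_simp
  ring

theorem angular_eq_angularVelocityAt (h : IsCharacteristicCurve b I X Vη Vφ) (hb : Continuous b)
    (hI : I.OrdConnected) (hs : s ∈ I) (ht : t ∈ I) :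
    Vφ t = angularVelocityAt b (X s) (Vφ s) (X t) := by
  have hmomentum : (1 - X t) * Vφ t - (1 - X s) * Vφ s = ∫ x in X s..X t, -((1 - x) * b x) :=
    sub_eq_integral_of_hasDerivWithinAt_comp_mul hI h.hasDerivWithinAt_position
      h.continuousOn_radial ((continuous_const.sub continuous_id).mul hb).neg.continuousOn
      (fun _ hr => h.hasDerivWithinAt_angularMomentum hr) hs ht
  rw [intervalIntegral.integral_neg] at hmomentum
  rw [angularVelocityAt, eq_div_iff (h.one_sub_ne_zero ht)]
  linarith

theorem radial_sq_sub_eq_integral (h : IsCharacteristicCurve b I X Vη Vφ) (hb : Continuous b)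
    (hI : I.OrdConnected) (hs : s ∈ I) (ht : t ∈ I) :
    Vη t ^ 2 - Vη s ^ 2 =
      ∫ x in X s..X t, -2 * angularVelocityAt b (X s) (Vφ s) x ^ 2 / (1 - x) := by
  have himage : X '' I ⊆ {1}ᶜ := image_subset_iff.2 h.ne_one
  have hforce : ContinuousOn
      (fun x => -2 * angularVelocityAt b (X s) (Vφ s) x ^ 2 / (1 - x)) {1}ᶜ :=
    (continuousOn_const.mul ((continuousOn_angularVelocityAt hb _ _).pow 2)).div
      (continuous_const.sub continuous_id).continuousOn fun x hx => sub_ne_zero.2 (Ne.symm hx)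
  refine sub_eq_integral_of_hasDerivWithinAt_comp_mul (G := fun r => Vη r ^ 2) hI
    h.hasDerivWithinAt_position h.continuousOn_radial (hforce.mono himage) (fun r hr => ?_) hs ht
  refine ((h.hasDerivWithinAt_radial r hr).pow 2).congr_deriv ?_
  rw [← h.angular_eq_angularVelocityAt hb hI hs hr]
  ring

end IsCharacteristicCurve

theorem bounce_back_general {b : ℝ → ℝ} (hb : Continuous b) {I : Set ℝ} (hI : I.OrdConnected)
    {X Vη Vφ : ℝ → ℝ} (h : IsCharacteristicCurve b I X Vη Vφ) {s₀ s₁ : ℝ} (h₀ : s₀ ∈ I)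
    (h₁ : s₁ ∈ I) (hreturn : X s₀ = X s₁) :
    Vφ s₁ = Vφ s₀ ∧ Vη s₁ ^ 2 = Vη s₀ ^ 2 := by
  constructor
  · calc
      Vφ s₁ = angularVelocityAt b (X s₀) (Vφ s₀) (X s₁) :=
        h.angular_eq_angularVelocityAt hb hI h₀ h₁
      _ = angularVelocityAt b (X s₀) (Vφ s₀) (X s₀) := by rw [hreturn]
      _ = Vφ s₀ := (h.angular_eq_angularVelocityAt hb hI h₀ h₀).symm
  · rw [← sub_eq_zero, h.radial_sq_sub_eq_integral hb hI h₀ h₁, hreturn,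
      intervalIntegral.integral_same]

/-- Bounce-back property of characteristic curves of the Taylor–Couette transport
field: if the radial position returns to its initial value, `X(s₀) = X(s₁)`, then
the angular velocity is restored, `V_φ(s₁) = V_φ(s₀)`, and the radial speed is
preserved, `V_η(s₁)² = V_η(s₀)²`. -/
theorem bounce_back
    (α η₁ : ℝ) (hα : 0 < α) (hη₁ : 0 < η₁) (hη₁' : η₁ < 1)
    (I : Set ℝ) (hI : I.OrdConnected)
    (X Vη Vφ Vz : ℝ → ℝ)
    (hX1 : ∀ s ∈ I, X s < 1)
    (hX : ∀ s ∈ I, HasDerivAt X (Vη s) s)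
    (hVη : ∀ s ∈ I, HasDerivAt Vη (-(Vφ s) ^ 2 / (1 - X s)) s)
    (hVφ : ∀ s ∈ I, HasDerivAt Vφ (Vη s * Vφ s / (1 - X s) - α / η₁ * Vη s) s)
    (hVz : ∀ s ∈ I, HasDerivAt Vz 0 s) :
    ∀ s₀ ∈ I, ∀ s₁ ∈ I, X s₀ = X s₁ →
      Vφ s₁ = Vφ s₀ ∧ (Vη s₁) ^ 2 = (Vη s₀) ^ 2 := by
  intro s₀ h₀ s₁ h₁ hreturn
  exact bounce_back_general (b := fun _ => α / η₁) continuous_const hI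
    ⟨fun s hs => (hX1 s hs).ne, fun s hs => (hX s hs).hasDerivWithinAt,
      fun s hs => (hVη s hs).hasDerivWithinAt, fun s hs => (hVφ s hs).hasDerivWithinAt⟩
    h₀ h₁ hreturn
end

section
/- Fix η₁ ∈ (0,1). There exist constants C > 0 and α₀ > 0, depending only on η₁, with the following property: for every α ∈ (0, α₀) and every v = (v_η, v_φ, v_z) ∈ ℝ³ such that v_η² ≥ I(v_φ), where I(v_φ) := ∫_{0}^{η₁} (2/(1−y))·[ v_φ/(1−y) + (α/(2η₁))(1−y) − (α/(2η₁))/(1−y) ]² dy, the transported velocity W across the channel, defined by W_φ := v_φ/(1−η₁) + (α/(2η₁))·(1−η₁) − (α/(2η₁))/(1−η₁), W_η² := v_η² − I(v_φ), W_z := v_z, satisfies the two-sided comparability (1 − C·α)·(1 + |v|²) ≤ 1 + W_η² + W_φ² + W_z² ≤ (1 + C·α)·(1 + |v|²). -/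
open MeasureTheory Real

/-!
Along a characteristic the azimuthal velocity `U` solves `U' = U / (1 - η) - 2a` with
`a = α / (2η₁)`, so `(U²)' = 2U² / (1 - η) - 4aU`. The first term is exactly the rate at which the
normal energy `v_η²` is spent; hence the total kinetic energy changes across the channel only by
the work `-4a ∫ U` of the shear, which is `O(α)` relative to `1 + |v|²` because `U` is bounded by
a multiple of `|v_φ| + |a|`.
-/

/-- The azimuthal velocity at position `y` of the characteristic that leaves `y = 0` with azimuthal
velocity `v`, where `a` stands for `α / (2 * η₁)`. It is meaningful for `y < 1` only. -/
noncomputable def azimuthalVelocity (a v y : ℝ) : ℝ :=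
  v / (1 - y) + a * (1 - y) - a / (1 - y)

/-- The normal energy `I(v)` spent in crossing from `0` to `η`: along the characteristic,
`v_η²` decreases by this amount. It is meaningful for `η < 1` only. -/
noncomputable def crossingEnergy (a v η : ℝ) : ℝ :=
  ∫ y in (0 : ℝ)..η, 2 / (1 - y) * azimuthalVelocity a v y ^ 2

theorem hasDerivAt_azimuthalVelocity (a v : ℝ) {y : ℝ} (hy : y < 1) :
    HasDerivAt (azimuthalVelocity a v) (azimuthalVelocity a v y / (1 - y) - 2 * a) y := by
  have hs : 1 - y ≠ 0 := (sub_pos.2 hy).ne'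
  have hsub : HasDerivAt (fun y : ℝ ↦ 1 - y) (-1) y := (hasDerivAt_id y).const_sub 1
  have hdiv (c : ℝ) : HasDerivAt (fun y ↦ c / (1 - y)) (c / (1 - y) ^ 2) y := by
    simpa using (hasDerivAt_const y c).fun_div hsub hs
  refine (((hdiv v).fun_add (hsub.const_mul a)).fun_sub (hdiv a)).congr_deriv ?_
  rw [azimuthalVelocity]
  field_simp
  ring

theorem hasDerivAt_azimuthalVelocity_sq (a v : ℝ) {y : ℝ} (hy : y < 1) :
    HasDerivAt (fun y ↦ azimuthalVelocity a v y ^ 2)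
      (2 / (1 - y) * azimuthalVelocity a v y ^ 2 - 4 * a * azimuthalVelocity a v y) y := by
  refine ((hasDerivAt_azimuthalVelocity a v hy).fun_pow 2).congr_deriv ?_
  ring

theorem azimuthalVelocity_sq_sub_crossingEnergy (a v : ℝ) {η : ℝ} (hη : η < 1) :
    azimuthalVelocity a v η ^ 2 - crossingEnergy a v η
      = v ^ 2 - 4 * a * ∫ y in (0 : ℝ)..η, azimuthalVelocity a v y := by
  have hlt : ∀ y ∈ Set.uIcc 0 η, y < 1 := fun y hy ↦ hy.2.trans_lt (max_lt one_pos hη)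
  have hU : ContinuousOn (azimuthalVelocity a v) (Set.uIcc 0 η) := fun y hy ↦
    (hasDerivAt_azimuthalVelocity a v (hlt y hy)).continuousAt.continuousWithinAt
  have hspent : IntervalIntegrable (fun y ↦ 2 / (1 - y) * azimuthalVelocity a v y ^ 2)
      volume 0 η :=
    ((continuousOn_const.div (by fun_prop) fun y hy ↦ (sub_pos.2 (hlt y hy)).ne').mul
      (hU.pow 2)).intervalIntegrable
  have hwork : IntervalIntegrable (fun y ↦ 4 * a * azimuthalVelocity a v y) volume 0 η :=
    (continuousOn_const.mul hU).intervalIntegrable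
  have hFTC := intervalIntegral.integral_eq_sub_of_hasDerivAt
    (fun y hy ↦ hasDerivAt_azimuthalVelocity_sq a v (hlt y hy)) (hspent.sub hwork)
  rw [intervalIntegral.integral_sub hspent hwork, intervalIntegral.integral_const_mul] at hFTC
  have hzero : azimuthalVelocity a v 0 = v := by simp [azimuthalVelocity]
  rw [hzero] at hFTC
  rw [crossingEnergy]
  linarith

theorem abs_azimuthalVelocity_le (a v : ℝ) {y : ℝ} (hy₀ : 0 ≤ y) (hy₁ : y < 1) :
    |azimuthalVelocity a v y| ≤ (|v| + |a|) / (1 - y) := by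
  have hs : 0 < 1 - y := sub_pos.2 hy₁
  have hfactor : |1 - (1 - y) ^ 2| ≤ 1 := by
    rw [abs_le]
    constructor <;> nlinarith
  have hmul : azimuthalVelocity a v y * (1 - y) = v - a * (1 - (1 - y) ^ 2) := by
    rw [azimuthalVelocity]
    field_simp
    ring
  rw [le_div_iff₀ hs]
  calc |azimuthalVelocity a v y| * (1 - y)
      = |v - a * (1 - (1 - y) ^ 2)| := by rw [← hmul, abs_mul, abs_of_pos hs]
    _ ≤ |v| + |a| * |1 - (1 - y) ^ 2| := by rw [← abs_mul]; exact abs_sub _ _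
    _ ≤ |v| + |a| := by gcongr; exact mul_le_of_le_one_right (abs_nonneg a) hfactor

theorem abs_integral_azimuthalVelocity_le (a v : ℝ) {η : ℝ} (hη₀ : 0 ≤ η) (hη₁ : η < 1) :
    |∫ y in (0 : ℝ)..η, azimuthalVelocity a v y| ≤ (|v| + |a|) / (1 - η) * η := by
  have hbound : ∀ y ∈ Set.uIoc 0 η, ‖azimuthalVelocity a v y‖ ≤ (|v| + |a|) / (1 - η) := by
    rw [Set.uIoc_of_le hη₀]
    rintro y ⟨hy₀, hyη⟩
    calc |azimuthalVelocity a v y|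
        ≤ (|v| + |a|) / (1 - y) := abs_azimuthalVelocity_le a v hy₀.le (hyη.trans_lt hη₁)
      _ ≤ (|v| + |a|) / (1 - η) :=
        div_le_div_of_nonneg_left (by positivity) (sub_pos.2 hη₁) (sub_le_sub_left hyη 1)
  simpa [abs_of_nonneg hη₀] using intervalIntegral.norm_integral_le_of_norm_le_const hbound

theorem abs_azimuthalVelocity_sq_sub_crossingEnergy_sub_sq_le (α v : ℝ) {η : ℝ}
    (hη₀ : 0 < η) (hη₁ : η < 1) :
    |azimuthalVelocity (α / (2 * η)) v η ^ 2 - crossingEnergy (α / (2 * η)) v η - v ^ 2|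
      ≤ (1 + |α| / η) / (1 - η) * |α| * (1 + v ^ 2) := by
  have hs : 0 < 1 - η := sub_pos.2 hη₁
  have habs : |α / (2 * η)| = |α| / (2 * η) := by rw [abs_div, abs_of_pos (mul_pos two_pos hη₀)]
  have hv : 2 * |v| ≤ 1 + v ^ 2 := by nlinarith [sq_nonneg (|v| - 1), sq_abs v]
  rw [azimuthalVelocity_sq_sub_crossingEnergy _ v hη₁]
  calc |v ^ 2 - 4 * (α / (2 * η)) * (∫ y in (0 : ℝ)..η, azimuthalVelocity (α / (2 * η)) v y)
          - v ^ 2|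
      = 4 * (|α| / (2 * η)) * |∫ y in (0 : ℝ)..η, azimuthalVelocity (α / (2 * η)) v y| := by
        rw [sub_sub_cancel_left, abs_neg, abs_mul, abs_mul, habs, abs_of_pos four_pos]
    _ ≤ 4 * (|α| / (2 * η)) * ((|v| + |α| / (2 * η)) / (1 - η) * η) := by
        gcongr
        exact habs ▸ abs_integral_azimuthalVelocity_le _ v hη₀.le hη₁
    _ = |α| / (1 - η) * (2 * |v| + |α| / η * 1) := by field_simp; ring
    _ ≤ |α| / (1 - η) * (1 + v ^ 2 + |α| / η * (1 + v ^ 2)) := by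
        gcongr
        exact le_add_of_nonneg_right (sq_nonneg v)
    _ = (1 + |α| / η) / (1 - η) * |α| * (1 + v ^ 2) := by ring

theorem transported_velocity_comparable_general
    {η₁ : ℝ} (hη₁ : 0 < η₁) (hη₁' : η₁ < 1) {α₀ : ℝ} (hα₀ : 0 < α₀) :
    ∃ C > 0, ∀ α : ℝ, |α| < α₀ → ∀ vη vφ vz : ℝ,
      (1 - C * |α|) * (1 + (vη ^ 2 + vφ ^ 2 + vz ^ 2))
          ≤ 1 + ((vη ^ 2 - crossingEnergy (α / (2 * η₁)) vφ η₁)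
            + azimuthalVelocity (α / (2 * η₁)) vφ η₁ ^ 2 + vz ^ 2)
        ∧ 1 + ((vη ^ 2 - crossingEnergy (α / (2 * η₁)) vφ η₁)
            + azimuthalVelocity (α / (2 * η₁)) vφ η₁ ^ 2 + vz ^ 2)
          ≤ (1 + C * |α|) * (1 + (vη ^ 2 + vφ ^ 2 + vz ^ 2)) := by
  have hs : 0 < 1 - η₁ := sub_pos.2 hη₁'
  refine ⟨(1 + α₀ / η₁) / (1 - η₁), div_pos (by positivity) hs, fun α hα vη vφ vz ↦ ?_⟩
  have hchange :
      |azimuthalVelocity (α / (2 * η₁)) vφ η₁ ^ 2 - crossingEnergy (α / (2 * η₁)) vφ η₁ - vφ ^ 2|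
        ≤ (1 + α₀ / η₁) / (1 - η₁) * |α| * (1 + (vη ^ 2 + vφ ^ 2 + vz ^ 2)) := by
    refine (abs_azimuthalVelocity_sq_sub_crossingEnergy_sub_sq_le α vφ hη₁ hη₁').trans ?_
    gcongr
    linarith [sq_nonneg vη, sq_nonneg vz]
  obtain ⟨hlower, hupper⟩ := abs_le.1 hchange
  constructor <;> linarith

/-- Two-sided comparability of `1 + |v|²` under transport across the whole channel:
there are `C > 0` and `α₀ > 0` such that for `α ∈ (0, α₀)` and any `v` whose
trajectory crosses the channel (`v_η² ≥ I(v_φ)`), the transported velocity `W`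
satisfies `(1 − Cα)(1 + |v|²) ≤ 1 + |W|² ≤ (1 + Cα)(1 + |v|²)`. -/
theorem transported_velocity_comparable
    (η₁ : ℝ) (hη₁ : 0 < η₁) (hη₁' : η₁ < 1) :
    ∃ C > 0, ∃ α₀ > 0, ∀ α : ℝ, 0 < α → α < α₀ →
      ∀ vη vφ vz : ℝ,
      ∀ Iv : ℝ, Iv = (∫ y in (0 : ℝ)..η₁,
          2 / (1 - y) * (vφ / (1 - y) + α / (2 * η₁) * (1 - y)
            - α / (2 * η₁) / (1 - y)) ^ 2) →
      Iv ≤ vη ^ 2 →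
      ∀ Wφ : ℝ, Wφ = vφ / (1 - η₁) + α / (2 * η₁) * (1 - η₁)
          - α / (2 * η₁) / (1 - η₁) →
      (1 - C * α) * (1 + (vη ^ 2 + vφ ^ 2 + vz ^ 2))
          ≤ 1 + ((vη ^ 2 - Iv) + Wφ ^ 2 + vz ^ 2)
        ∧ 1 + ((vη ^ 2 - Iv) + Wφ ^ 2 + vz ^ 2)
          ≤ (1 + C * α) * (1 + (vη ^ 2 + vφ ^ 2 + vz ^ 2)) := by
  obtain ⟨C, hC, h⟩ := transported_velocity_comparable_general hη₁ hη₁' one_pos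
  refine ⟨C, hC, 1, one_pos, fun α hα hα₁ vη vφ vz Iv hIv _ Wφ hWφ ↦ ?_⟩
  simpa only [hIv, hWφ, abs_of_pos hα, crossingEnergy, azimuthalVelocity]
    using h α (by rwa [abs_of_pos hα]) vη vφ vz
end

section
/- Fix η₁ ∈ (0,1). For every τ ∈ (0,1) there exist α₀ ∈ (0,1) and a constant C_τ > 0 such that for every α ∈ (0, α₀) and every continuously differentiable function f : [0,η₁] × ℝ³ → ℝ for which f and Tf are integrable on (0,η₁) × ℝ³, one has ∫_{{v : v_η ≥ τ, |v_φ| ≥ τ, |v| ≤ 1/τ}} |f(η₁, v)|·|v_η| dv + ∫_{{v : v_η ≤ −τ, |v_φ| ≥ τ, |v| ≤ 1/τ}} |f(0, v)|·|v_η| dv ≤ C_τ·( ‖f‖_{L¹((0,η₁)×ℝ³)} + ‖Tf‖_{L¹((0,η₁)×ℝ³)} ), where Tf := v_η·∂_η f − (1/(1−η))·( v_φ²·∂_{v_η} f − v_η v_φ·∂_{v_φ} f ) − (α/η₁)·v_η·∂_{v_φ} f. -/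
open MeasureTheory Set

open Filter Function Topology

/-!
In divergence form, `div (|f| w X) = w X·∇|f| + |f| div (w X)` for the characteristic field `X` of
the transport operator and a weight `w`. The weight interpolates across the channel between cutoffs
around the kept part of the outgoing boundary at each wall. Each cutoff vanishes on the incoming
velocities of its wall, so both boundary fluxes of `|f| w X` have the good sign, and the divergence
theorem bounds their sum by the interior integrals of `|f|` and `|X·∇f|`. As `|f|` need not be
`C¹`, it is replaced by `√(f² + ε²) - ε` and `ε → 0`.
-/

section Divergence

variable {F : Type*} [NormedAddCommGroup F] [NormedSpace ℝ F] {X Y : F → F} {x : F}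

/-- The divergence of a vector field `X`, encoded without coordinates as the trace of its
derivative; like `fderiv`, it is `0` where `X` is not differentiable. -/
noncomputable def divergence (X : F → F) (x : F) : ℝ :=
  LinearMap.trace ℝ F (fderiv ℝ X x)

lemma divergence_add (hX : DifferentiableAt ℝ X x) (hY : DifferentiableAt ℝ Y x) :
    divergence (fun y => X y + Y y) x = divergence X x + divergence Y x := by
  simp [divergence, fderiv_fun_add hX hY]

lemma divergence_const_smul (hX : DifferentiableAt ℝ X x) (c : ℝ) :
    divergence (fun y => c • X y) x = c * divergence X x := by
  simp [divergence, fderiv_fun_const_smul hX]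

lemma support_divergence_subset (X : F → F) : support (divergence X) ⊆ tsupport X := by
  refine Subset.trans (fun x hx => ?_) (support_fderiv_subset ℝ)
  contrapose! hx
  simp_all [divergence]

lemma integrable_fderiv_apply [MeasurableSpace F] [OpensMeasurableSpace F] (μ : Measure F)
    [IsFiniteMeasureOnCompacts μ] {g : F → ℝ} (hg : ContDiff ℝ 1 g) (hg_supp : HasCompactSupport g)
    (e : F) : Integrable (fun x => fderiv ℝ g x e) μ :=
  ((hg.continuous_fderiv one_ne_zero).clm_apply continuous_const).integrable_of_hasCompactSupport
    (hg_supp.fderiv_apply (𝕜 := ℝ) e)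

variable [FiniteDimensional ℝ F]

lemma divergence_smul {w : F → ℝ} (hw : DifferentiableAt ℝ w x) (hX : DifferentiableAt ℝ X x) :
    divergence (fun y => w y • X y) x = w x * divergence X x + fderiv ℝ w x (X x) := by
  simp [divergence, fderiv_fun_smul hw hX]

lemma divergence_eq_sum_fderiv_coord {ι : Type*} [Fintype ι] (e : Module.Basis ι ℝ F)
    (hX : DifferentiableAt ℝ X x) :
    divergence X x = ∑ i, fderiv ℝ (fun y => e.coord i (X y)) x (e i) := by
  classical
  have hcoord (i : ι) : fderiv ℝ (fun y => e.coord i (X y)) x (e i) =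
      e.coord i (fderiv ℝ X x (e i)) := by
    have h := ((e.coord i).toContinuousLinearMap.hasFDerivAt.comp x hX.hasFDerivAt).fderiv
    exact DFunLike.congr_fun h (e i)
  simp_rw [hcoord]
  simp [divergence, LinearMap.trace_eq_matrix_trace ℝ e, Matrix.trace, LinearMap.toMatrix_apply]

lemma continuousAt_divergence (hX : ContDiffAt ℝ 1 X x) : ContinuousAt (divergence X) x := by
  have htrace : Continuous fun L : F →L[ℝ] F => LinearMap.trace ℝ F L :=
    (LinearMap.trace ℝ F ∘ₗ ContinuousLinearMap.coeLM ℝ).continuous_of_finiteDimensional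
  exact htrace.continuousAt.comp (hX.continuousAt_fderiv one_ne_zero)

variable [MeasurableSpace F] [BorelSpace F] (μ : Measure F) [μ.IsAddHaarMeasure]

lemma integral_fderiv_apply_eq_zero {g : F → ℝ} (hg : ContDiff ℝ 1 g)
    (hg_supp : HasCompactSupport g) (e : F) : ∫ x, fderiv ℝ g x e ∂μ = 0 := by
  simpa using integral_mul_fderiv_eq_neg_fderiv_mul_of_integrable (μ := μ) (f := fun _ => (1 : ℝ))
    (g := g) (v := e) (by simp) (by simpa using integrable_fderiv_apply μ hg hg_supp e)
    (by simpa using hg.continuous.integrable_of_hasCompactSupport hg_supp) (by fun_prop)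
    fun x _ => hg.differentiable one_ne_zero x

theorem integral_divergence_eq_zero (hX : ContDiff ℝ 1 X) (hX_supp : HasCompactSupport X) :
    ∫ x, divergence X x ∂μ = 0 := by
  let e := Module.finBasis ℝ F
  have hcoord_smooth (i) : ContDiff ℝ 1 fun x => e.coord i (X x) :=
    (e.coord i).toContinuousLinearMap.contDiff.comp hX
  have hcoord_supp (i) : HasCompactSupport fun x => e.coord i (X x) :=
    hX_supp.comp_left (map_zero (e.coord i))
  simp_rw [fun x => divergence_eq_sum_fderiv_coord e (hX.differentiable one_ne_zero x)]
  rw [integral_finsetSum _ fun i _ => integrable_fderiv_apply μ (hcoord_smooth i) (hcoord_supp i) _]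
  exact Finset.sum_eq_zero fun i _ =>
    integral_fderiv_apply_eq_zero μ (hcoord_smooth i) (hcoord_supp i) _

end Divergence

section SlabFunctions

variable {E : Type*} [TopologicalSpace E] {h : ℝ × E → ℝ} {a b : ℝ} {K : Set E}

lemma exists_abs_le_of_slab (hK : IsCompact K)
    (hh : ContinuousOn h (Icc a b ×ˢ univ)) (hh_supp : support h ⊆ univ ×ˢ K) :
    ∃ M, ∀ p : ℝ × E, p.1 ∈ Icc a b → |h p| ≤ M := by
  obtain ⟨M, hM⟩ := (isCompact_Icc.prod hK).exists_bound_of_continuousOn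
    (hh.mono (prod_mono_right (subset_univ K)))
  refine ⟨max M 0, fun p hp => ?_⟩
  by_cases hpK : p.2 ∈ K
  · exact le_max_of_le_left (hM p ⟨hp, hpK⟩)
  · simp [notMem_support.1 fun hp' => hpK (hh_supp hp').2]

lemma hasCompactSupport_slice [R1Space E] {M : Type*} [Zero M] {h : ℝ × E → M} (hK : IsCompact K)
    (hh_supp : support h ⊆ univ ×ˢ K) (s : ℝ) : HasCompactSupport fun v => h (s, v) :=
  .of_support_subset_isCompact hK fun _ hv => (hh_supp hv).2

variable [MeasurableSpace E] [OpensMeasurableSpace E] {μ : Measure E} [IsFiniteMeasureOnCompacts μ]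

lemma integrableOn_slab [T2Space E] [SFinite μ] (hK : IsCompact K)
    (hh : ContinuousOn h (Icc a b ×ˢ univ)) (hh_supp : support h ⊆ univ ×ˢ K) :
    IntegrableOn h (Ioo a b ×ˢ univ) (volume.prod μ) := by
  have hcompact : IntegrableOn h (Icc a b ×ˢ K) (volume.prod μ) :=
    (hh.mono (prod_mono_right (subset_univ K))).integrableOn_compact (isCompact_Icc.prod hK)
  refine (hcompact.of_forall_sdiff_eq_zero (measurableSet_Icc.prod .univ) fun p hp => ?_).mono_set
    (prod_mono_left Ioo_subset_Icc_self)
  exact notMem_support.1 fun hp' => hp.2 ⟨hp.1.1, (hh_supp hp').2⟩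

lemma integrable_slice [R1Space E] (hK : IsCompact K) (hh_supp : support h ⊆ univ ×ˢ K)
    {s : ℝ} (hh : ∀ v, ContinuousAt h (s, v)) : Integrable (fun v => h (s, v)) μ :=
  (continuous_iff_continuousAt.2 fun v =>
    (hh v).comp (Continuous.prodMk_right s).continuousAt).integrable_of_hasCompactSupport
    (hasCompactSupport_slice hK hh_supp s)

end SlabFunctions

section Slab

lemma continuousOn_fderiv_fst_slab {E : Type*} [NormedAddCommGroup E] [NormedSpace ℝ E]
    {X : ℝ × E → ℝ × E} {a b : ℝ} (hX : ∀ p : ℝ × E, p.1 ∈ Icc a b → ContDiffAt ℝ 1 X p) :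
    ContinuousOn (fun p => (fderiv ℝ X p (1, 0)).1) (Icc a b ×ˢ univ) := fun p hp =>
  (((hX p hp.1).continuousAt_fderiv one_ne_zero).clm_apply
    continuousAt_const).fst.continuousWithinAt

variable {E : Type*} [NormedAddCommGroup E] [NormedSpace ℝ E] [FiniteDimensional ℝ E]
  {X : ℝ × E → ℝ × E} {a b : ℝ} {K : Set E}

lemma divergence_eq_fderiv_fst_add_divergence_snd {p : ℝ × E} (hX : DifferentiableAt ℝ X p) :
    divergence X p =
      (fderiv ℝ X p (1, 0)).1 + divergence (fun v => (X (p.1, v)).2) p.2 := by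
  set L : ℝ × E →ₗ[ℝ] ℝ × E := (fderiv ℝ X p).toLinearMap
  have hslice : (fderiv ℝ (fun v => (X (p.1, v)).2) p.2 : E →ₗ[ℝ] E) =
      .snd ℝ ℝ E ∘ₗ L ∘ₗ .inr ℝ ℝ E := by
    have h := (hX.hasFDerivAt.comp p.2 (hasFDerivAt_prodMk_right (𝕜 := ℝ) p.1 p.2)).snd.fderiv
    exact congrArg ContinuousLinearMap.toLinearMap h
  have hsplit : L = (L ∘ₗ .inl ℝ ℝ E) ∘ₗ .fst ℝ ℝ E + (L ∘ₗ .inr ℝ ℝ E) ∘ₗ .snd ℝ ℝ E := by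
    rw [LinearMap.comp_assoc, LinearMap.comp_assoc, ← LinearMap.comp_add]
    ext <;> simp
  have hreal (l : ℝ →ₗ[ℝ] ℝ) : LinearMap.trace ℝ ℝ l = l 1 := by
    rw [LinearMap.trace_eq_matrix_trace ℝ (Module.Basis.singleton Unit ℝ)]
    simp [Matrix.trace, LinearMap.toMatrix_apply]
  calc divergence X p = LinearMap.trace ℝ (ℝ × E) L := rfl
    _ = LinearMap.trace ℝ ℝ (.fst ℝ ℝ E ∘ₗ L ∘ₗ .inl ℝ ℝ E) +
        LinearMap.trace ℝ E (.snd ℝ ℝ E ∘ₗ L ∘ₗ .inr ℝ ℝ E) := by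
      conv_lhs => rw [hsplit]
      rw [map_add, LinearMap.trace_comp_comm', LinearMap.trace_comp_comm' (.snd ℝ ℝ E)]
    _ = (fderiv ℝ X p (1, 0)).1 + divergence (fun v => (X (p.1, v)).2) p.2 := by
      rw [hreal, divergence, hslice]
      rfl

lemma continuousOn_slab_divergence (hX : ∀ p : ℝ × E, p.1 ∈ Icc a b → ContDiffAt ℝ 1 X p) :
    ContinuousOn (divergence X) (Icc a b ×ˢ univ) :=
  fun p hp => (continuousAt_divergence (hX p hp.1)).continuousWithinAt

variable [MeasurableSpace E] [BorelSpace E] {μ : Measure E} [μ.IsAddHaarMeasure]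

lemma integrableOn_fderiv_fst_slab (hX : ∀ p : ℝ × E, p.1 ∈ Icc a b → ContDiffAt ℝ 1 X p)
    (hK : IsCompact K) (hX_supp : tsupport X ⊆ univ ×ˢ K) :
    IntegrableOn (fun p => (fderiv ℝ X p (1, 0)).1) (Ioo a b ×ˢ univ) (volume.prod μ) := by
  refine integrableOn_slab hK (continuousOn_fderiv_fst_slab hX) fun p hp =>
    hX_supp (support_fderiv_subset ℝ fun h0 => hp ?_)
  simp [h0]

lemma integral_fderiv_fst_slab (hab : a ≤ b)
    (hX : ∀ p : ℝ × E, p.1 ∈ Icc a b → ContDiffAt ℝ 1 X p)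
    (hK : IsCompact K) (hX_supp : tsupport X ⊆ univ ×ˢ K) :
    ∫ p in Ioo a b ×ˢ univ, (fderiv ℝ X p (1, 0)).1 ∂(volume.prod μ) =
      ∫ v, (X (b, v)).1 ∂μ - ∫ v, (X (a, v)).1 ∂μ := by
  have hcont := continuousOn_fderiv_fst_slab hX
  have hint := integrableOn_fderiv_fst_slab (μ := μ) hX hK hX_supp
  have hX_supp_fst : support (fun p => (X p).1) ⊆ univ ×ˢ K := fun p hp =>
    hX_supp (subset_tsupport X fun h0 => hp (by simp [h0]))
  have hslice {s : ℝ} (hs : s ∈ Icc a b) : Integrable (fun v => (X (s, v)).1) μ :=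
    integrable_slice hK hX_supp_fst fun v => (hX (s, v) hs).continuousAt.fst
  have hftc (v : E) : ∫ s in Ioo a b, (fderiv ℝ X (s, v) (1, 0)).1 =
      (X (b, v)).1 - (X (a, v)).1 := by
    rw [← integral_Ioc_eq_integral_Ioo, ← intervalIntegral.integral_of_le hab]
    rw [← uIcc_of_le hab] at hX hcont
    refine intervalIntegral.integral_eq_sub_of_hasDerivAt (f := fun s => (X (s, v)).1)
      (fun s hs => ?_) ?_
    · exact (((hX (s, v) hs).differentiableAt one_ne_zero).hasFDerivAt.comp s
        (hasFDerivAt_prodMk_left (𝕜 := ℝ) s v)).fst.hasDerivAt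
    · exact (hcont.comp (f := fun s => (s, v)) (by fun_prop)
        fun s hs => ⟨hs, mem_univ v⟩).intervalIntegrable
  rw [IntegrableOn, ← Measure.restrict_prod_eq_prod_univ] at hint
  rw [← Measure.restrict_prod_eq_prod_univ, integral_prod_symm _ hint]
  simp_rw [hftc]
  exact integral_sub (hslice (right_mem_Icc.2 hab)) (hslice (left_mem_Icc.2 hab))

theorem integral_divergence_slab (hab : a ≤ b)
    (hX : ∀ p : ℝ × E, p.1 ∈ Icc a b → ContDiffAt ℝ 1 X p)
    (hK : IsCompact K) (hX_supp : tsupport X ⊆ univ ×ˢ K) :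
    ∫ p in Ioo a b ×ˢ univ, divergence X p ∂(volume.prod μ) =
      ∫ v, (X (b, v)).1 ∂μ - ∫ v, (X (a, v)).1 ∂μ := by
  have hflux_int := integrableOn_fderiv_fst_slab (μ := μ) hX hK hX_supp
  have hdiv_int : IntegrableOn (divergence X) (Ioo a b ×ˢ univ) (volume.prod μ) :=
    integrableOn_slab hK (continuousOn_slab_divergence hX)
      ((support_divergence_subset X).trans hX_supp)
  have htangential {s : ℝ} (hs : s ∈ Ioo a b) :
      ∫ v, (divergence X (s, v) - (fderiv ℝ X (s, v) (1, 0)).1) ∂μ = 0 := by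
    have hXs (v : E) : ContDiffAt ℝ 1 X (s, v) := hX _ (Ioo_subset_Icc_self hs)
    have hX_supp_snd : support (fun p => (X p).2) ⊆ univ ×ˢ K := fun p hp =>
      hX_supp (subset_tsupport X fun h0 => hp (by simp [h0]))
    simp_rw [fun v => divergence_eq_fderiv_fst_add_divergence_snd
      ((hXs v).differentiableAt one_ne_zero), add_sub_cancel_left]
    refine integral_divergence_eq_zero μ (contDiff_iff_contDiffAt.2 fun v => ?_)
      (hasCompactSupport_slice hK hX_supp_snd s)
    exact ((hXs v).comp v (contDiffAt_const.prodMk contDiffAt_id)).snd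
  rw [← integral_fderiv_fst_slab hab hX hK hX_supp, ← sub_eq_zero,
    ← integral_sub hdiv_int hflux_int]
  have hsub_int := Integrable.sub hdiv_int hflux_int
  rw [← Measure.restrict_prod_eq_prod_univ] at hsub_int ⊢
  refine (integral_prod _ hsub_int).trans ?_
  exact setIntegral_eq_zero_of_forall_eq_zero fun s hs => htangential hs

end Slab

section SoftAbs

/-- A smooth approximation of the absolute value from below, used to apply the calculus of
`C¹` functions to `|f|`. -/
noncomputable def softAbs (ε x : ℝ) : ℝ :=
  √(x ^ 2 + ε ^ 2) - ε

variable {ε : ℝ}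

lemma contDiff_softAbs (hε : ε ≠ 0) : ContDiff ℝ 1 (softAbs ε) :=
  (((contDiff_id.pow 2).add contDiff_const).sqrt fun x => by positivity).sub contDiff_const

lemma abs_softAbs_le (hε : 0 ≤ ε) (x : ℝ) : |softAbs ε x| ≤ |x| := by
  have hlower : ε ≤ √(x ^ 2 + ε ^ 2) := Real.le_sqrt_of_sq_le (by nlinarith [sq_nonneg x])
  have hupper : √(x ^ 2 + ε ^ 2) ≤ |x| + ε := by
    rw [Real.sqrt_le_left (by positivity), ← sq_abs x]
    nlinarith [mul_nonneg (abs_nonneg x) hε]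
  rw [softAbs, abs_of_nonneg (by linarith)]
  linarith

lemma deriv_softAbs (hε : ε ≠ 0) (x : ℝ) : deriv (softAbs ε) x = x / √(x ^ 2 + ε ^ 2) := by
  have h : HasDerivAt (softAbs ε) _ x :=
    (((hasDerivAt_pow 2 x).add_const (ε ^ 2)).sqrt (by positivity)).sub_const ε
  rw [h.deriv]
  simp [mul_div_mul_left]

lemma abs_deriv_softAbs_le_one (hε : ε ≠ 0) (x : ℝ) : |deriv (softAbs ε) x| ≤ 1 := by
  rw [deriv_softAbs hε, abs_div, abs_of_nonneg (Real.sqrt_nonneg _)]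
  refine div_le_one_of_le₀ (Real.le_sqrt_of_sq_le ?_) (Real.sqrt_nonneg _)
  rw [sq_abs]
  linarith [sq_nonneg ε]

lemma tendsto_softAbs (x : ℝ) : Tendsto (fun ε => softAbs ε x) (𝓝[>] 0) (𝓝 |x|) := by
  have h : Continuous fun ε => softAbs ε x := by
    unfold softAbs
    fun_prop
  simpa [softAbs, Real.sqrt_sq_eq_abs] using (h.tendsto 0).mono_left nhdsWithin_le_nhds

lemma tendsto_integral_softAbs_mul {Ω : Type*} [MeasurableSpace Ω] {μ : Measure Ω} {u h : Ω → ℝ}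
    (hu : AEStronglyMeasurable u μ) (hh : AEStronglyMeasurable h μ)
    (huh : Integrable (fun ω => u ω * h ω) μ) :
    Tendsto (fun ε => ∫ ω, softAbs ε (u ω) * h ω ∂μ) (𝓝[>] 0) (𝓝 (∫ ω, |u ω| * h ω ∂μ)) := by
  refine tendsto_integral_filter_of_dominated_convergence (fun ω => |u ω * h ω|) ?_ ?_ huh.abs
    (.of_forall fun ω => (tendsto_softAbs (u ω)).mul_const (h ω))
  all_goals filter_upwards [self_mem_nhdsWithin] with ε hε
  · exact ((contDiff_softAbs (ne_of_gt hε)).continuous.comp_aestronglyMeasurable hu).mul hh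
  · refine .of_forall fun ω => ?_
    rw [Real.norm_eq_abs, abs_mul, abs_mul]
    exact mul_le_mul_of_nonneg_right (abs_softAbs_le (le_of_lt hε) _) (abs_nonneg _)

end SoftAbs

section WeightedTrace

/-- A multiplier `w` for the transport equation along `X` in the slab `[a, b] × E`: a `C¹` function
with compact support in the `E`-variable, such that neither `w` nor the divergence of `w X` exceeds
`M` in absolute value. -/
structure IsSlabWeight {E : Type*} [NormedAddCommGroup E] [NormedSpace ℝ E]
    (w : ℝ × E → ℝ) (X : ℝ × E → ℝ × E) (a b M : ℝ) : Prop where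
  contDiff : ContDiff ℝ 1 w
  exists_isCompact : ∃ K, IsCompact K ∧ tsupport w ⊆ univ ×ˢ K
  abs_le : ∀ p : ℝ × E, p.1 ∈ Icc a b → |w p| ≤ M
  abs_divergence_le :
    ∀ p : ℝ × E, p.1 ∈ Icc a b → |divergence (fun q => w q • X q) p| ≤ M

variable {E : Type*} [NormedAddCommGroup E] [NormedSpace ℝ E] [FiniteDimensional ℝ E]
  [MeasurableSpace E] [BorelSpace E] {μ : Measure E} [μ.IsAddHaarMeasure]
  {X : ℝ × E → ℝ × E} {w : ℝ × E → ℝ} {a b M : ℝ}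

lemma abs_integral_flux_sub_le (hab : a ≤ b)
    (hX : ∀ p : ℝ × E, p.1 ∈ Icc a b → ContDiffAt ℝ 1 X p) (hw : IsSlabWeight w X a b M)
    {g : ℝ × E → ℝ} (hg : ∀ p : ℝ × E, p.1 ∈ Icc a b → ContDiffAt ℝ 1 g p)
    (hg_int : IntegrableOn g (Ioo a b ×ˢ univ) (volume.prod μ))
    (hXg_int : IntegrableOn (fun p => fderiv ℝ g p (X p)) (Ioo a b ×ˢ univ) (volume.prod μ)) :
    |∫ v, g (b, v) * (w (b, v) * (X (b, v)).1) ∂μ - ∫ v, g (a, v) * (w (a, v) * (X (a, v)).1) ∂μ|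
      ≤ M * (∫ p in Ioo a b ×ˢ univ, |g p| ∂(volume.prod μ) +
        ∫ p in Ioo a b ×ˢ univ, |fderiv ℝ g p (X p)| ∂(volume.prod μ)) := by
  obtain ⟨K, hK, hw_supp⟩ := hw.exists_isCompact
  have hwX (p : ℝ × E) (hp : p.1 ∈ Icc a b) : ContDiffAt ℝ 1 (fun q => w q • X q) p :=
    hw.contDiff.contDiffAt.smul (hX p hp)
  have hdiv (p : ℝ × E) (hp : p.1 ∈ Icc a b) : divergence (fun q => g q • w q • X q) p =
      g p * divergence (fun q => w q • X q) p + w p * fderiv ℝ g p (X p) := by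
    rw [divergence_smul ((hg p hp).differentiableAt one_ne_zero)
      ((hwX p hp).differentiableAt one_ne_zero), map_smul, smul_eq_mul]
  have hsupp : tsupport (fun q => g q • w q • X q) ⊆ univ ×ˢ K :=
    ((tsupport_smul_subset_right g (w • X)).trans (tsupport_smul_subset_left w X)).trans hw_supp
  have hflux := integral_divergence_slab (μ := μ) hab (X := fun q => g q • w q • X q)
    (fun p hp => (hg p hp).smul (hwX p hp)) hK hsupp
  simp only [Prod.smul_fst, smul_eq_mul] at hflux
  rw [← hflux, mul_add, ← integral_const_mul, ← integral_const_mul,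
    ← integral_add (hg_int.abs.const_mul M) (hXg_int.abs.const_mul M)]
  refine norm_integral_le_of_norm_le (G := ℝ)
    ((hg_int.abs.const_mul M).add (hXg_int.abs.const_mul M))
    (ae_restrict_of_forall_mem (measurableSet_Ioo.prod .univ) fun p hp => ?_)
  have hp' : p.1 ∈ Icc a b := Ioo_subset_Icc_self hp.1
  calc |divergence (fun q => g q • w q • X q) p|
      ≤ |g p * divergence (fun q => w q • X q) p| + |w p * fderiv ℝ g p (X p)| := by
        rw [hdiv p hp']
        exact abs_add_le _ _
    _ ≤ M * |g p| + M * |fderiv ℝ g p (X p)| := by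
        rw [abs_mul, abs_mul, mul_comm |g p|]
        gcongr
        exacts [hw.abs_divergence_le p hp', hw.abs_le p hp']

lemma abs_integral_softAbs_flux_sub_le (hab : a ≤ b)
    (hX : ∀ p : ℝ × E, p.1 ∈ Icc a b → ContDiffAt ℝ 1 X p) (hw : IsSlabWeight w X a b M)
    {f : ℝ × E → ℝ} (hf : ∀ p : ℝ × E, p.1 ∈ Icc a b → ContDiffAt ℝ 1 f p)
    (hf_int : IntegrableOn f (Ioo a b ×ˢ univ) (volume.prod μ))
    (hXf_int : IntegrableOn (fun p => fderiv ℝ f p (X p)) (Ioo a b ×ˢ univ) (volume.prod μ))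
    {ε : ℝ} (hε : 0 < ε) :
    |∫ v, softAbs ε (f (b, v)) * (w (b, v) * (X (b, v)).1) ∂μ -
        ∫ v, softAbs ε (f (a, v)) * (w (a, v) * (X (a, v)).1) ∂μ|
      ≤ M * (∫ p in Ioo a b ×ˢ univ, |f p| ∂(volume.prod μ) +
        ∫ p in Ioo a b ×ˢ univ, |fderiv ℝ f p (X p)| ∂(volume.prod μ)) := by
  have hslab : MeasurableSet (Ioo a b ×ˢ (univ : Set E)) := measurableSet_Ioo.prod .univ
  have hφ : ContDiff ℝ 1 (softAbs ε) := contDiff_softAbs hε.ne'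
  have hchain {p : ℝ × E} (hp : p ∈ Ioo a b ×ˢ univ) :
      fderiv ℝ (fun q => softAbs ε (f q)) p (X p) =
        deriv (softAbs ε) (f p) * fderiv ℝ f p (X p) := by
    have h := ((hφ.differentiable one_ne_zero (f p)).hasDerivAt.comp_hasFDerivAt p
      ((hf p (Ioo_subset_Icc_self hp.1)).differentiableAt one_ne_zero).hasFDerivAt).fderiv
    exact DFunLike.congr_fun h (X p)
  have hφf_le (p : ℝ × E) : |softAbs ε (f p)| ≤ |f p| := abs_softAbs_le hε.le _
  have hXφf_le {p : ℝ × E} (hp : p ∈ Ioo a b ×ˢ univ) :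
      |fderiv ℝ (fun q => softAbs ε (f q)) p (X p)| ≤ |fderiv ℝ f p (X p)| := by
    rw [hchain hp, abs_mul]
    exact mul_le_of_le_one_left (abs_nonneg _) (abs_deriv_softAbs_le_one hε.ne' _)
  have hφf_int : IntegrableOn (fun p => softAbs ε (f p)) (Ioo a b ×ˢ univ) (volume.prod μ) :=
    hf_int.abs.mono' (hφ.continuous.comp_aestronglyMeasurable hf_int.1) (.of_forall hφf_le)
  have hXφf_int : IntegrableOn (fun p => fderiv ℝ (fun q => softAbs ε (f q)) p (X p))
      (Ioo a b ×ˢ univ) (volume.prod μ) := by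
    refine hXf_int.abs.mono' ?_ (ae_restrict_of_forall_mem hslab fun p hp => hXφf_le hp)
    refine (((hφ.continuous_deriv le_rfl).comp_aestronglyMeasurable hf_int.1).mul hXf_int.1).congr
      (ae_restrict_of_forall_mem hslab fun p hp => (hchain hp).symm)
  have hM : 0 ≤ M := (abs_nonneg _).trans (hw.abs_le (a, 0) (left_mem_Icc.2 hab))
  refine (abs_integral_flux_sub_le hab hX hw
    (fun p hp => hφ.contDiffAt.comp p (hf p hp)) hφf_int hXφf_int).trans ?_
  gcongr ?_ * (?_ + ?_)
  · exact integral_mono hφf_int.abs hf_int.abs hφf_le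
  · exact setIntegral_mono_on hXφf_int.abs hXf_int.abs hslab fun p hp => hXφf_le hp

theorem abs_integral_abs_flux_sub_le (hab : a ≤ b)
    (hX : ∀ p : ℝ × E, p.1 ∈ Icc a b → ContDiffAt ℝ 1 X p) (hw : IsSlabWeight w X a b M)
    {f : ℝ × E → ℝ} (hf : ∀ p : ℝ × E, p.1 ∈ Icc a b → ContDiffAt ℝ 1 f p)
    (hf_int : IntegrableOn f (Ioo a b ×ˢ univ) (volume.prod μ))
    (hXf_int : IntegrableOn (fun p => fderiv ℝ f p (X p)) (Ioo a b ×ˢ univ) (volume.prod μ)) :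
    |∫ v, |f (b, v)| * (w (b, v) * (X (b, v)).1) ∂μ -
        ∫ v, |f (a, v)| * (w (a, v) * (X (a, v)).1) ∂μ|
      ≤ M * (∫ p in Ioo a b ×ˢ univ, |f p| ∂(volume.prod μ) +
        ∫ p in Ioo a b ×ˢ univ, |fderiv ℝ f p (X p)| ∂(volume.prod μ)) := by
  obtain ⟨K, hK, hw_supp⟩ := hw.exists_isCompact
  have hlim {s : ℝ} (hs : s ∈ Icc a b) :
      Tendsto (fun ε => ∫ v, softAbs ε (f (s, v)) * (w (s, v) * (X (s, v)).1) ∂μ) (𝓝[>] 0)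
        (𝓝 (∫ v, |f (s, v)| * (w (s, v) * (X (s, v)).1) ∂μ)) := by
    have hf_cont (v : E) : ContinuousAt f (s, v) := (hf (s, v) hs).continuousAt
    have hwX_cont (v : E) : ContinuousAt (fun p => w p * (X p).1) (s, v) :=
      hw.contDiff.continuous.continuousAt.mul (hX (s, v) hs).continuousAt.fst
    have hsupp : support (fun p => f p * (w p * (X p).1)) ⊆ univ ×ˢ K := fun p hp =>
      hw_supp (subset_tsupport w fun h0 => hp (by simp [h0]))
    have hslice {h : ℝ × E → ℝ} (hh : ∀ v, ContinuousAt h (s, v)) :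
        AEStronglyMeasurable (fun v => h (s, v)) μ :=
      (continuous_iff_continuousAt.2 fun v =>
        (hh v).comp (Continuous.prodMk_right s).continuousAt).aestronglyMeasurable
    exact tendsto_integral_softAbs_mul (hslice hf_cont) (hslice hwX_cont)
      (integrable_slice hK hsupp fun v => (hf_cont v).mul (hwX_cont v))
  refine le_of_tendsto ((hlim (right_mem_Icc.2 hab)).sub (hlim (left_mem_Icc.2 hab))).abs ?_
  filter_upwards [self_mem_nhdsWithin] with ε hε
  exact abs_integral_softAbs_flux_sub_le hab hX hw hf hf_int hXf_int hε

end WeightedTrace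

section Cutoff

/-- `χ` is a cutoff function for `K` within `U`. No upper bound is required. -/
structure IsCutoff {E : Type*} (χ : E → ℝ) (K U : Set E) : Prop where
  nonneg : ∀ v, 0 ≤ χ v
  eq_one : ∀ v ∈ K, χ v = 1
  eq_zero : ∀ v ∉ U, χ v = 0

lemma IsCutoff.subset {E : Type*} {χ : E → ℝ} {K U : Set E} (hχ : IsCutoff χ K U) : K ⊆ U := by
  intro v hv
  by_contra hvU
  simpa [hχ.eq_one v hv] using hχ.eq_zero v hvU

lemma IsCutoff.setIntegral_abs_mul_le {E : Type*} [MeasurableSpace E] {μ : Measure E}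
    {χ u n : E → ℝ} {K U : Set E} (hχ : IsCutoff χ K U) (hK : MeasurableSet K)
    (hn : ∀ v ∈ U, 0 ≤ n v) (hint : Integrable (fun v => |u v| * (χ v * n v)) μ) :
    ∫ v in K, |u v| * |n v| ∂μ ≤ ∫ v, |u v| * (χ v * n v) ∂μ := by
  have hnonneg (v : E) : 0 ≤ |u v| * (χ v * n v) := by
    by_cases hv : v ∈ U
    · have := hχ.nonneg v
      have := hn v hv
      positivity
    · simp [hχ.eq_zero v hv]
  calc ∫ v in K, |u v| * |n v| ∂μ = ∫ v in K, |u v| * (χ v * n v) ∂μ :=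
        setIntegral_congr_fun hK fun v hv => by
          simp [hχ.eq_one v hv, abs_of_nonneg (hn v (hχ.subset hv))]
    _ ≤ ∫ v, |u v| * (χ v * n v) ∂μ := setIntegral_le_integral hint (.of_forall hnonneg)

variable {E : Type*} [NormedAddCommGroup E] [NormedSpace ℝ E] [FiniteDimensional ℝ E]

open scoped Manifold in
lemma exists_contDiff_isCutoff {K U : Set E} (hK : IsCompact K) (hU : IsOpen U) (hKU : K ⊆ U) :
    ∃ χ : E → ℝ, ContDiff ℝ 1 χ ∧ HasCompactSupport χ ∧ IsCutoff χ K U := by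
  obtain ⟨L, hL, hKL, hLU⟩ := exists_compact_between hK hU hKU
  obtain ⟨χ, hone, hzero, hrange⟩ :=
    exists_contMDiffMap_one_nhds_of_subset_interior (n := 1) 𝓘(ℝ, E) hK.isClosed hKL
  exact ⟨χ, χ.contMDiff.contDiff, .intro hL hzero, fun v => (hrange v).1,
    fun v hv => (hone.filter_mono (nhds_le_nhdsSet hv)).self_of_nhds,
    fun v hv => hzero v fun hvL => hv (hLU hvL)⟩

lemma exists_slab_cutoff {a b : ℝ} (hab : a < b) {K₀ U₀ K₁ U₁ : Set E}
    (hK₀ : IsCompact K₀) (hU₀ : IsOpen U₀) (hKU₀ : K₀ ⊆ U₀)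
    (hK₁ : IsCompact K₁) (hU₁ : IsOpen U₁) (hKU₁ : K₁ ⊆ U₁) :
    ∃ w : ℝ × E → ℝ, ContDiff ℝ 1 w ∧ (∃ K, IsCompact K ∧ tsupport w ⊆ univ ×ˢ K) ∧
      IsCutoff (fun v => w (a, v)) K₀ U₀ ∧ IsCutoff (fun v => w (b, v)) K₁ U₁ := by
  obtain ⟨χ₀, hχ₀_smooth, hχ₀_supp, hχ₀⟩ := exists_contDiff_isCutoff hK₀ hU₀ hKU₀
  obtain ⟨χ₁, hχ₁_smooth, hχ₁_supp, hχ₁⟩ := exists_contDiff_isCutoff hK₁ hU₁ hKU₁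
  let w (p : ℝ × E) : ℝ := ((b - p.1) * χ₀ p.2 + (p.1 - a) * χ₁ p.2) / (b - a)
  have hba : b - a ≠ 0 := sub_ne_zero.2 hab.ne'
  have hwa : (fun v => w (a, v)) = χ₀ := by
    ext v
    simp [w, hba]
  have hwb : (fun v => w (b, v)) = χ₁ := by
    ext v
    simp [w, hba]
  refine ⟨w, by fun_prop, ⟨tsupport χ₀ ∪ tsupport χ₁, hχ₀_supp.isCompact.union hχ₁_supp.isCompact,
    ?_⟩, hwa ▸ hχ₀, hwb ▸ hχ₁⟩
  refine closure_minimal (fun p hp => ⟨mem_univ _, ?_⟩)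
    (isClosed_univ.prod ((isClosed_tsupport χ₀).union (isClosed_tsupport χ₁)))
  contrapose! hp
  rw [mem_union, not_or] at hp
  simp [w, image_eq_zero_of_notMem_tsupport hp.1, image_eq_zero_of_notMem_tsupport hp.2]

end Cutoff

section OutgoingTrace

variable {E : Type*} [NormedAddCommGroup E] [NormedSpace ℝ E] [FiniteDimensional ℝ E]
  {X Y : ℝ × E → ℝ × E} {w : ℝ × E → ℝ} {a b M : ℝ} {K₀ K₁ : Set E}

lemma exists_isSlabWeight (hX : ∀ p : ℝ × E, p.1 ∈ Icc a b → ContDiffAt ℝ 1 X p)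
    (hY : ∀ p : ℝ × E, p.1 ∈ Icc a b → ContDiffAt ℝ 1 Y p) (hw : ContDiff ℝ 1 w)
    (hw_supp : ∃ K, IsCompact K ∧ tsupport w ⊆ univ ×ˢ K) (A : ℝ) :
    ∃ M > 0, ∀ c : ℝ, |c| ≤ A → IsSlabWeight w (fun p => X p + c • Y p) a b M := by
  obtain ⟨K, hK, hw_supp⟩ := hw_supp
  have hdiv_le {Z : ℝ × E → ℝ × E} (hZ : ∀ p : ℝ × E, p.1 ∈ Icc a b → ContDiffAt ℝ 1 Z p) :
      ∃ B, ∀ p : ℝ × E, p.1 ∈ Icc a b → |divergence (fun q => w q • Z q) p| ≤ B :=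
    exists_abs_le_of_slab hK
      (continuousOn_slab_divergence fun p hp => hw.contDiffAt.smul (hZ p hp))
      ((support_divergence_subset _).trans ((tsupport_smul_subset_left w Z).trans hw_supp))
  obtain ⟨B, hB⟩ := exists_abs_le_of_slab (a := a) (b := b) hK hw.continuous.continuousOn
    ((subset_tsupport w).trans hw_supp)
  obtain ⟨BX, hBX⟩ := hdiv_le hX
  obtain ⟨BY, hBY⟩ := hdiv_le hY
  refine ⟨max (max B (BX + A * BY)) 1, by positivity, fun c hc => ⟨hw, ⟨K, hK, hw_supp⟩,
    fun p hp => le_max_of_le_left (le_max_of_le_left (hB p hp)),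
    fun p hp => le_max_of_le_left (le_max_of_le_right ?_)⟩⟩
  have hwX : DifferentiableAt ℝ (fun q => w q • X q) p :=
    (hw.contDiffAt.smul (hX p hp)).differentiableAt one_ne_zero
  have hwY : DifferentiableAt ℝ (fun q => w q • Y q) p :=
    (hw.contDiffAt.smul (hY p hp)).differentiableAt one_ne_zero
  calc |divergence (fun q => w q • (X q + c • Y q)) p|
      = |divergence (fun q => w q • X q) p + c * divergence (fun q => w q • Y q) p| := by
        simp only [smul_add, smul_comm (w _) c]
        rw [← divergence_const_smul hwY, ← divergence_add hwX (hwY.fun_const_smul c)]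
    _ ≤ |divergence (fun q => w q • X q) p| + |c| * |divergence (fun q => w q • Y q) p| := by
        rw [← abs_mul]
        exact abs_add_le _ _
    _ ≤ BX + A * BY := by
        gcongr
        exacts [hBX p hp, (abs_nonneg c).trans hc, hBY p hp]

variable [MeasurableSpace E] [BorelSpace E] {μ : Measure E} [μ.IsAddHaarMeasure]

lemma IsSlabWeight.outgoing_trace_le (hw : IsSlabWeight w X a b M) (hab : a ≤ b)
    (hX : ∀ p : ℝ × E, p.1 ∈ Icc a b → ContDiffAt ℝ 1 X p)
    (hK₀ : MeasurableSet K₀) (hK₁ : MeasurableSet K₁)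
    (hw₀ : IsCutoff (fun v => w (a, v)) K₀ {v | (X (a, v)).1 < 0})
    (hw₁ : IsCutoff (fun v => w (b, v)) K₁ {v | 0 < (X (b, v)).1})
    {f : ℝ × E → ℝ} (hf : ∀ p : ℝ × E, p.1 ∈ Icc a b → ContDiffAt ℝ 1 f p)
    (hf_int : IntegrableOn f (Ioo a b ×ˢ univ) (volume.prod μ))
    (hXf_int : IntegrableOn (fun p => fderiv ℝ f p (X p)) (Ioo a b ×ˢ univ) (volume.prod μ)) :
    ∫ v in K₁, |f (b, v)| * |(X (b, v)).1| ∂μ + ∫ v in K₀, |f (a, v)| * |(X (a, v)).1| ∂μ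
      ≤ M * (∫ p in Ioo a b ×ˢ univ, |f p| ∂(volume.prod μ) +
        ∫ p in Ioo a b ×ˢ univ, |fderiv ℝ f p (X p)| ∂(volume.prod μ)) := by
  obtain ⟨K, hK, hw_supp⟩ := hw.exists_isCompact
  have hflux_int {s : ℝ} (hs : s ∈ Icc a b) :
      Integrable (fun v => |f (s, v)| * (w (s, v) * (X (s, v)).1)) μ := by
    refine integrable_slice (h := fun p => |f p| * (w p * (X p).1)) hK (fun p hp => ?_) fun v => ?_
    · exact hw_supp (subset_tsupport w fun h0 => hp (by simp [h0]))
    · exact (hf (s, v) hs).continuousAt.abs.mul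
        (hw.contDiff.continuous.continuousAt.mul (hX (s, v) hs).continuousAt.fst)
  have hflux_b := hw₁.setIntegral_abs_mul_le hK₁ (fun v hv => le_of_lt hv)
    (hflux_int (right_mem_Icc.2 hab))
  have hflux_a := hw₀.setIntegral_abs_mul_le (n := fun v => -(X (a, v)).1) hK₀
    (fun v hv => (neg_pos.2 hv).le) (by simpa using (hflux_int (left_mem_Icc.2 hab)).neg)
  simp only [abs_neg, mul_neg, integral_neg] at hflux_a
  linarith [le_of_abs_le (abs_integral_abs_flux_sub_le hab hX hw hf hf_int hXf_int)]

theorem exists_outgoing_trace_le (hab : a < b)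
    (hX : ∀ p : ℝ × E, p.1 ∈ Icc a b → ContDiffAt ℝ 1 X p)
    (hY : ∀ p : ℝ × E, p.1 ∈ Icc a b → ContDiffAt ℝ 1 Y p) (hY_fst : ∀ p, (Y p).1 = 0)
    (hK₀ : IsCompact K₀) (hK₀_out : ∀ v ∈ K₀, (X (a, v)).1 < 0)
    (hK₁ : IsCompact K₁) (hK₁_out : ∀ v ∈ K₁, 0 < (X (b, v)).1) (A : ℝ) :
    ∃ C > 0, ∀ c : ℝ, |c| ≤ A → ∀ f : ℝ × E → ℝ,
      (∀ p : ℝ × E, p.1 ∈ Icc a b → ContDiffAt ℝ 1 f p) →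
      IntegrableOn f (Ioo a b ×ˢ univ) (volume.prod μ) →
      IntegrableOn (fun p => fderiv ℝ f p (X p + c • Y p)) (Ioo a b ×ˢ univ) (volume.prod μ) →
      ∫ v in K₁, |f (b, v)| * |(X (b, v)).1| ∂μ + ∫ v in K₀, |f (a, v)| * |(X (a, v)).1| ∂μ
        ≤ C * (∫ p in Ioo a b ×ˢ univ, |f p| ∂(volume.prod μ) +
          ∫ p in Ioo a b ×ˢ univ, |fderiv ℝ f p (X p + c • Y p)| ∂(volume.prod μ)) := by
  have hX_fst_cont {s : ℝ} (hs : s ∈ Icc a b) : Continuous fun v => (X (s, v)).1 :=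
    continuous_iff_continuousAt.2 fun v =>
      ((hX (s, v) hs).continuousAt.comp (Continuous.prodMk_right s).continuousAt).fst
  obtain ⟨w, hw_smooth, hw_supp, hw₀, hw₁⟩ := exists_slab_cutoff hab
    hK₀ (isOpen_lt (hX_fst_cont (left_mem_Icc.2 hab.le)) continuous_const) hK₀_out
    hK₁ (isOpen_lt continuous_const (hX_fst_cont (right_mem_Icc.2 hab.le))) hK₁_out
  obtain ⟨M, hM, hw⟩ := exists_isSlabWeight hX hY hw_smooth hw_supp A
  have hfst (c : ℝ) (p : ℝ × E) : (X p + c • Y p).1 = (X p).1 := by simp [hY_fst]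
  refine ⟨M, hM, fun c hc f hf hf_int hXf_int => ?_⟩
  have h := (hw c hc).outgoing_trace_le hab.le
    (fun p hp => (hX p hp).add ((hY p hp).const_smul c))
    hK₀.measurableSet hK₁.measurableSet (by simpa only [hfst] using hw₀)
    (by simpa only [hfst] using hw₁) hf hf_int hXf_int
  simpa only [hfst] using h

end OutgoingTrace

section TaylorCouette

/-- The Taylor–Couette transport operator with geometric correction on the channel `(0, η₁) × ℝ³`,
a phase point being `p = (η, v_η, v_φ, v_z)`. -/
noncomputable def taylorCouetteTransport (η₁ α : ℝ) (f : ℝ × ℝ × ℝ × ℝ → ℝ)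
    (p : ℝ × ℝ × ℝ × ℝ) : ℝ :=
  p.2.1 * fderiv ℝ f p (1, 0, 0, 0)
    - 1 / (1 - p.1) * ((p.2.2.1) ^ 2 * fderiv ℝ f p (0, 1, 0, 0)
        - p.2.1 * p.2.2.1 * fderiv ℝ f p (0, 0, 1, 0))
    - α / η₁ * p.2.1 * fderiv ℝ f p (0, 0, 1, 0)

/-- The part of the characteristic field of `taylorCouetteTransport` that does not depend on `α`:
free streaming and the geometric correction. -/
noncomputable def geometricField (p : ℝ × ℝ × ℝ × ℝ) : ℝ × ℝ × ℝ × ℝ :=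
  (p.2.1, -(p.2.2.1 ^ 2 / (1 - p.1)), p.2.1 * p.2.2.1 / (1 - p.1), 0)

/-- The part of the characteristic field of `taylorCouetteTransport` proportional to `α / η₁`. -/
noncomputable def shearField (p : ℝ × ℝ × ℝ × ℝ) : ℝ × ℝ × ℝ × ℝ :=
  (0, 0, -p.2.1, 0)

lemma taylorCouetteTransport_eq_fderiv (η₁ α : ℝ) (f : ℝ × ℝ × ℝ × ℝ → ℝ)
    (p : ℝ × ℝ × ℝ × ℝ) : taylorCouetteTransport η₁ α f p =
      fderiv ℝ f p (geometricField p + (α / η₁) • shearField p) := by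
  have hfield : geometricField p + (α / η₁) • shearField p =
      p.2.1 • (1, 0, 0, 0) + (-(p.2.2.1 ^ 2 / (1 - p.1))) • (0, 1, 0, 0) +
        (p.2.1 * p.2.2.1 / (1 - p.1) - α / η₁ * p.2.1) • (0, 0, 1, 0) := by
    simp [geometricField, shearField, sub_eq_add_neg]
  rw [hfield]
  simp only [map_add, map_smul, smul_eq_mul, taylorCouetteTransport]
  ring

lemma contDiffAt_geometricField {p : ℝ × ℝ × ℝ × ℝ} (hp : p.1 ≠ 1) :
    ContDiffAt ℝ 1 geometricField p := by
  have hp' : 1 - p.1 ≠ 0 := sub_ne_zero.2 hp.symm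
  unfold geometricField
  fun_prop (disch := assumption)

lemma contDiff_shearField : ContDiff ℝ 1 shearField := by
  unfold shearField
  fun_prop

lemma isCompact_setOf_speed_le (R : ℝ) :
    IsCompact {v : ℝ × ℝ × ℝ | √(v.1 ^ 2 + v.2.1 ^ 2 + v.2.2 ^ 2) ≤ R} := by
  refine (isCompact_closedBall (0 : ℝ × ℝ × ℝ) R).of_isClosed_subset
    (isClosed_le (by fun_prop) continuous_const) fun v hv => ?_
  have hcoord {x : ℝ} (hx : x ^ 2 ≤ v.1 ^ 2 + v.2.1 ^ 2 + v.2.2 ^ 2) : |x| ≤ R :=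
    (Real.abs_le_sqrt hx).trans hv
  simp only [mem_closedBall_zero_iff, Prod.norm_def, Real.norm_eq_abs, sup_le_iff]
  refine ⟨hcoord ?_, hcoord ?_, hcoord ?_⟩ <;> nlinarith [sq_nonneg v.1]

lemma isCompact_setOf_nongrazing {S : Set ℝ} (hS : IsClosed S) (τ R : ℝ) :
    IsCompact {v : ℝ × ℝ × ℝ | v.1 ∈ S ∧ τ ≤ |v.2.1| ∧
      √(v.1 ^ 2 + v.2.1 ^ 2 + v.2.2 ^ 2) ≤ R} := by
  have hnongrazing : IsClosed {v : ℝ × ℝ × ℝ | τ ≤ |v.2.1|} :=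
    isClosed_le (by fun_prop) (by fun_prop)
  exact ((isCompact_setOf_speed_le R).inter_left hnongrazing).inter_left
    (hS.preimage continuous_fst)

theorem steady_trace_lemma_general {η₁ : ℝ} (hη₁ : 0 < η₁) (hη₁' : η₁ < 1)
    {K₀ K₁ : Set (ℝ × ℝ × ℝ)} (hK₀ : IsCompact K₀) (hK₀_out : ∀ v ∈ K₀, v.1 < 0)
    (hK₁ : IsCompact K₁) (hK₁_out : ∀ v ∈ K₁, 0 < v.1) (A : ℝ) :
    ∃ C > 0, ∀ α : ℝ, |α| ≤ A → ∀ f : ℝ × ℝ × ℝ × ℝ → ℝ,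
      (∀ p : ℝ × ℝ × ℝ × ℝ, p.1 ∈ Icc 0 η₁ → ContDiffAt ℝ 1 f p) →
      IntegrableOn f (Ioo 0 η₁ ×ˢ univ) →
      IntegrableOn (taylorCouetteTransport η₁ α f) (Ioo 0 η₁ ×ˢ univ) →
      (∫ v in K₁, |f (η₁, v)| * |v.1|) + (∫ v in K₀, |f (0, v)| * |v.1|)
        ≤ C * ((∫ p in Ioo 0 η₁ ×ˢ univ, |f p|) +
          ∫ p in Ioo 0 η₁ ×ˢ univ, |taylorCouetteTransport η₁ α f p|) := by
  have : (volume : Measure (ℝ × ℝ × ℝ)).IsAddHaarMeasure :=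
    Measure.prod.instIsAddHaarMeasure volume volume
  obtain ⟨C, hC, htrace⟩ := exists_outgoing_trace_le (μ := volume) (X := geometricField)
    (Y := shearField) hη₁ (fun p hp => contDiffAt_geometricField (hp.2.trans_lt hη₁').ne)
    (fun p _ => contDiff_shearField.contDiffAt) (fun _ => rfl) hK₀ hK₀_out hK₁ hK₁_out (A / η₁)
  refine ⟨C, hC, fun α hα f hf hf_int hTf_int => ?_⟩
  have hα' : |α / η₁| ≤ A / η₁ := by
    rw [abs_div, abs_of_pos hη₁]
    gcongr
  simp only [funext (taylorCouetteTransport_eq_fderiv η₁ α f)] at hTf_int ⊢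
  exact htrace (α / η₁) hα' f hf hf_int hTf_int

end TaylorCouette

/-- **Steady trace lemma.** For the Taylor–Couette transport operator
`Tf = v_η ∂_η f − (1/(1−η))(v_φ² ∂_{v_η} f − v_η v_φ ∂_{v_φ} f) − (α/η₁) v_η ∂_{v_φ} f`
on the channel `(0,η₁) × ℝ³` (phase point `p = (η, v_η, v_φ, v_z)`), the outgoing
boundary trace away from grazing velocities is controlled by
`‖f‖_{L¹} + ‖Tf‖_{L¹}`. -/
theorem steady_trace_lemma
    (η₁ : ℝ) (hη₁ : 0 < η₁) (hη₁' : η₁ < 1)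
    (τ : ℝ) (hτ : 0 < τ) (hτ' : τ < 1) :
    ∃ α₀, 0 < α₀ ∧ α₀ < 1 ∧ ∃ C > 0, ∀ α : ℝ, 0 < α → α < α₀ →
      ∀ f : ℝ × ℝ × ℝ × ℝ → ℝ, ContDiff ℝ 1 f →
      ∀ Tf : ℝ × ℝ × ℝ × ℝ → ℝ,
      (Tf = fun p => p.2.1 * fderiv ℝ f p (1, 0, 0, 0)
          - 1 / (1 - p.1) * ((p.2.2.1) ^ 2 * fderiv ℝ f p (0, 1, 0, 0)
              - p.2.1 * p.2.2.1 * fderiv ℝ f p (0, 0, 1, 0))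
          - α / η₁ * p.2.1 * fderiv ℝ f p (0, 0, 1, 0)) →
      IntegrableOn f (Set.Ioo (0 : ℝ) η₁ ×ˢ (Set.univ : Set (ℝ × ℝ × ℝ))) →
      IntegrableOn Tf (Set.Ioo (0 : ℝ) η₁ ×ˢ (Set.univ : Set (ℝ × ℝ × ℝ))) →
      (∫ v in {v : ℝ × ℝ × ℝ | τ ≤ v.1 ∧ τ ≤ |v.2.1| ∧
            Real.sqrt (v.1 ^ 2 + v.2.1 ^ 2 + v.2.2 ^ 2) ≤ 1 / τ},
          |f (η₁, v)| * |v.1|)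
        + (∫ v in {v : ℝ × ℝ × ℝ | v.1 ≤ -τ ∧ τ ≤ |v.2.1| ∧
            Real.sqrt (v.1 ^ 2 + v.2.1 ^ 2 + v.2.2 ^ 2) ≤ 1 / τ},
          |f (0, v)| * |v.1|)
      ≤ C * ((∫ p in Set.Ioo (0 : ℝ) η₁ ×ˢ (Set.univ : Set (ℝ × ℝ × ℝ)), |f p|)
           + (∫ p in Set.Ioo (0 : ℝ) η₁ ×ˢ (Set.univ : Set (ℝ × ℝ × ℝ)), |Tf p|)) := by
  obtain ⟨C, hC, htrace⟩ := steady_trace_lemma_general hη₁ hη₁'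
    (isCompact_setOf_nongrazing isClosed_Iic τ (1 / τ))
    (fun v hv => (mem_Iic.1 hv.1).trans_lt (neg_lt_zero.2 hτ))
    (isCompact_setOf_nongrazing isClosed_Ici τ (1 / τ)) (fun v hv => hτ.trans_le hv.1) 1
  refine ⟨1 / 2, by norm_num, by norm_num, C, hC, fun α hα hα' f hf Tf hTf hf_int hTf_int => ?_⟩
  subst hTf
  exact htrace α (abs_le.2 ⟨by linarith, by linarith⟩) f (fun p _ => hf.contDiffAt) hf_int hTf_int
end

section
/- Fix η₁ ∈ (0,1). For every τ ∈ (0,1) there exist α₀ ∈ (0,1) and a constant C_τ > 0 such that for every α ∈ (0, α₀), every T > 0, and every continuously differentiable function f : [0,T] × [0,η₁] × ℝ³ → ℝ with all quantities below finite, one has ∫_0^T [ ∫_{{v : v_η ≥ τ, |v_φ| ≥ τ, |v| ≤ 1/τ}} |f(t, η₁, v)|·|v_η| dv + ∫_{{v : v_η ≤ −τ, |v_φ| ≥ τ, |v| ≤ 1/τ}} |f(t, 0, v)|·|v_η| dv ] dt ≤ C_τ·( ‖f(0)‖_{L¹} + ∫_0^T ‖f(t)‖_{L¹} dt + ∫_0^T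 ‖(∂_t f + T f)(t)‖_{L¹} dt ), where Tf := v_η·∂_η f − (1/(1−η))·( v_φ²·∂_{v_η} f − v_η v_φ·∂_{v_φ} f ) − (α/η₁)·v_η·∂_{v_φ} f and all L¹ norms are over (0,η₁) × ℝ³. -/
open MeasureTheory Set

/-!
Multiply a `C¹` regularization `g` of `|f|` by a cutoff `ψ(η, v)` which equals `1` on the outgoing
boundary velocities away from grazing and whose sign on each wall is such that `v_η ψ` counts
outgoing flux only. Since the transport field has divergence `κ(η) v_η`, integrating the
conservative form `(∂_t + T)(ψ g) + κ v_η ψ g` over the slab leaves only the initial and final data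
and the boundary flux of `ψ g`, which dominates the trace. Pointwise this quantity is
`ψ (∂_t + T) g + g (T ψ + κ v_η ψ)`, at most `|(∂_t + T) f| + C |f|` because the factor of `g` is
continuous with compact support, hence bounded. Removing the regularization gives the estimate.
-/

local notation "ℝ³" => ℝ × ℝ × ℝ

open Filter Topology in
lemma le_of_forall_pos_le_add_mul {x y c : ℝ} (h : ∀ ε > 0, x ≤ y + ε * c) : x ≤ y := by
  have hlim : Tendsto (fun ε => y + ε * c) (𝓝[>] 0) (𝓝 (y + 0 * c)) :=
    Continuous.tendsto (by fun_prop) 0 |>.mono_left nhdsWithin_le_nhds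
  simpa using ge_of_tendsto hlim (eventually_mem_nhdsWithin.mono h)

section RegularizedAbs

/-- The regularized absolute value `√(x² + ε²) - ε`, a nonnegative `C¹` minorant of `|x|` with
slope at most `1`; it is shifted so as to vanish at `0`, which keeps `L¹` functions in `L¹`. -/
noncomputable def regularizedAbs (ε x : ℝ) : ℝ := √(x ^ 2 + ε ^ 2) - ε

variable {ε : ℝ}

lemma regularizedAbs_nonneg (x : ℝ) : 0 ≤ regularizedAbs ε x :=
  sub_nonneg.2 <| Real.le_sqrt_of_sq_le <| le_add_of_nonneg_left (sq_nonneg x)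

lemma regularizedAbs_le_abs (hε : 0 ≤ ε) (x : ℝ) : regularizedAbs ε x ≤ |x| := by
  rw [regularizedAbs, sub_le_iff_le_add, Real.sqrt_le_left (by positivity), add_sq, sq_abs]
  have : 0 ≤ 2 * |x| * ε := by positivity
  linarith

lemma abs_le_regularizedAbs_add (x : ℝ) : |x| ≤ regularizedAbs ε x + ε := by
  rw [regularizedAbs, sub_add_cancel]
  exact Real.abs_le_sqrt (le_add_of_nonneg_right (sq_nonneg ε))

lemma hasDerivAt_regularizedAbs (hε : 0 < ε) (x : ℝ) :
    HasDerivAt (regularizedAbs ε) (x / √(x ^ 2 + ε ^ 2)) x := by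
  have hpos : x ^ 2 + ε ^ 2 ≠ 0 := by positivity
  refine (((hasDerivAt_pow 2 x).add_const (ε ^ 2)).sqrt hpos |>.sub_const ε).congr_deriv ?_
  simp [mul_div_mul_left]

lemma contDiff_regularizedAbs (hε : 0 < ε) {n : WithTop ℕ∞} : ContDiff ℝ n (regularizedAbs ε) :=
  ((contDiff_id.pow 2).add contDiff_const).sqrt
    (fun x => (by positivity : 0 < x ^ 2 + ε ^ 2).ne') |>.sub contDiff_const

lemma abs_fderiv_regularizedAbs_comp_le {E : Type*} [NormedAddCommGroup E] [NormedSpace ℝ E]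
    (hε : 0 < ε) {f : E → ℝ} {p : E} (hf : DifferentiableAt ℝ f p) (y : E) :
    |fderiv ℝ (fun p => regularizedAbs ε (f p)) p y| ≤ |fderiv ℝ f p y| := by
  have hslope : |f p / √(f p ^ 2 + ε ^ 2)| ≤ 1 := by
    rw [abs_div, abs_of_nonneg (Real.sqrt_nonneg _)]
    exact div_le_one_of_le₀ (Real.abs_le_sqrt (le_add_of_nonneg_right (sq_nonneg ε)))
      (Real.sqrt_nonneg _)
  have hcomp : HasFDerivAt (fun p => regularizedAbs ε (f p))
      ((f p / √(f p ^ 2 + ε ^ 2)) • fderiv ℝ f p) p :=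
    (hasDerivAt_regularizedAbs hε (f p)).comp_hasFDerivAt p hf.hasFDerivAt
  rw [hcomp.fderiv, smul_apply, smul_eq_mul, abs_mul]
  exact mul_le_of_le_one_left (abs_nonneg _) hslope

end RegularizedAbs

section Slices

variable {E : Type*} [NormedAddCommGroup E] [NormedSpace ℝ E]

lemma fderiv_comp_prodMk_apply {E' : Type*} [NormedAddCommGroup E'] [NormedSpace ℝ E']
    {f : E' × E → ℝ} {x : E'} {y : E} (hf : DifferentiableAt ℝ f (x, y)) (e : E) :
    fderiv ℝ (fun y => f (x, y)) y e = fderiv ℝ f (x, y) (0, e) := by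
  have hslice : HasFDerivAt (fun y => f (x, y)) _ y :=
    hf.hasFDerivAt.comp y (hasFDerivAt_prodMk_right x y)
  rw [hslice.fderiv]
  rfl

lemma hasDerivAt_comp_prodMk {f : ℝ × E → ℝ} {x : ℝ} {y : E} (hf : DifferentiableAt ℝ f (x, y)) :
    HasDerivAt (fun x => f (x, y)) (fderiv ℝ f (x, y) (1, 0)) x :=
  hf.hasFDerivAt.comp_hasDerivAt x ((hasDerivAt_id x).prodMk (hasDerivAt_const x y))

lemma hasCompactSupport_comp_prodMk {X Y : Type*} [TopologicalSpace X] [TopologicalSpace Y]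
    [R1Space Y] {f : X × Y → ℝ} (hf : HasCompactSupport f) (x : X) :
    HasCompactSupport fun y => f (x, y) :=
  .intro (hf.isCompact.image continuous_snd) fun _ hy =>
    image_eq_zero_of_notMem_tsupport fun h => hy ⟨_, h, rfl⟩

end Slices

section Integrals

lemma setIntegral_prod_volume {X Y : Type*} [MeasureSpace X] [MeasureSpace Y]
    [SFinite (volume : Measure X)] [SFinite (volume : Measure Y)] {F : X × Y → ℝ} {s : Set X}
    {t : Set Y} (hF : IntegrableOn F (s ×ˢ t)) :
    ∫ p in s ×ˢ t, F p = ∫ x in s, ∫ y in t, F (x, y) :=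
  setIntegral_prod F hF

lemma setIntegral_le_integral_of_le_on {X : Type*} [MeasurableSpace X] {μ : Measure X}
    {φ W : X → ℝ} (hφ : Measurable φ) (hW : Measurable W) (hW' : Integrable W μ)
    (hφ₀ : ∀ x, 0 ≤ φ x) (hW₀ : ∀ x, 0 ≤ W x) {s : Set X} (h : ∀ x ∈ s, φ x ≤ W x) :
    ∫ x in s, φ x ∂μ ≤ ∫ x, W x ∂μ :=
  calc ∫ x in s, φ x ∂μ ≤ ∫ x in s, W x ∂μ :=
        integral_mono_of_nonneg (.of_forall hφ₀) hW'.restrict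
          ((ae_restrict_iff (measurableSet_le hφ hW)).2 (.of_forall h))
    _ ≤ ∫ x, W x ∂μ := setIntegral_le_integral hW' (.of_forall hW₀)

lemma integral_mul_fderiv_add_lineDeriv_mul_eq_zero {E : Type*} [NormedAddCommGroup E]
    [NormedSpace ℝ E] [FiniteDimensional ℝ E] [MeasurableSpace E] [BorelSpace E] {μ : Measure E}
    [μ.IsAddHaarMeasure] {h h' u : E → ℝ} {e : E} (hh : Continuous h) (hh' : Continuous h')
    (hderiv : ∀ x, HasLineDerivAt ℝ h (h' x) x e) (hu : ContDiff ℝ 1 u)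
    (hus : HasCompactSupport u) : ∫ x, (h x * fderiv ℝ u x e + h' x * u x) ∂μ = 0 := by
  have hu' : Continuous fun x => fderiv ℝ u x e := (hu.continuous_fderiv one_ne_zero).clm_apply
    continuous_const
  have int₁ : Integrable (fun x => h x * fderiv ℝ u x e) μ :=
    (hh.mul hu').integrable_of_hasCompactSupport (hus.fderiv_apply ℝ e).mul_left
  have int₂ : Integrable (fun x => h' x * u x) μ :=
    (hh'.mul hu.continuous).integrable_of_hasCompactSupport hus.mul_left
  have parts := integral_bilinear_hasLineDerivAt_right_eq_neg_left_of_integrable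
    (B := ContinuousLinearMap.mul ℝ ℝ) int₂ int₁
    ((hh.mul hu.continuous).integrable_of_hasCompactSupport hus.mul_left)
    (fun x _ => hderiv x)
    (fun x _ => ((hu.differentiable one_ne_zero x).hasFDerivAt.hasLineDerivAt e))
  rw [integral_add int₁ int₂]
  exact add_eq_zero_iff_eq_neg.2 parts

variable {Y : Type*} [TopologicalSpace Y] [T2Space Y]
  [SecondCountableTopology Y] [MeasurableSpace Y] [BorelSpace Y] {ν : Measure Y}
  [IsFiniteMeasureOnCompacts ν] [SFinite ν] {K : Set Y}

lemma integrable_prod_of_eq_zero_off_compact {F : ℝ × Y → ℝ} (hF : Continuous F)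
    (hK : IsCompact K) (h₀ : ∀ x, ∀ y ∉ K, F (x, y) = 0) (a b : ℝ) :
    Integrable F ((volume.restrict (Ioo a b)).prod ν) := by
  have hbox : IntegrableOn F (Icc a b ×ˢ K) (volume.prod ν) :=
    hF.continuousOn.integrableOn_compact (isCompact_Icc.prod hK)
  have hslab : IntegrableOn F (Ioo a b ×ˢ univ) (volume.prod ν) :=
    hbox.of_forall_sdiff_eq_zero (measurableSet_Ioo.prod .univ)
      fun p hp => h₀ p.1 p.2 fun hpK => hp.2 ⟨Ioo_subset_Icc_self hp.1.1, hpK⟩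
  rwa [IntegrableOn, ← Measure.prod_restrict, Measure.restrict_univ] at hslab

lemma integral_Ioo_integral_deriv_eq_sub {F F' : ℝ × Y → ℝ} (hF : Continuous F)
    (hF' : Continuous F') (hderiv : ∀ x y, HasDerivAt (fun x => F (x, y)) (F' (x, y)) x)
    (hK : IsCompact K) (h₀ : ∀ x, ∀ y ∉ K, F (x, y) = 0) {a b : ℝ} (hab : a ≤ b) :
    ∫ x in Ioo a b, ∫ y, F' (x, y) ∂ν = ∫ y, F (b, y) ∂ν - ∫ y, F (a, y) ∂ν := by
  have h₀' : ∀ x, ∀ y ∉ K, F' (x, y) = 0 := fun x y hy =>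
    (hderiv x y).unique (by simpa only [h₀ _ y hy] using hasDerivAt_const x (0 : ℝ))
  have hslice : ∀ x, Integrable (fun y => F (x, y)) ν := fun x =>
    (hF.comp (Continuous.prodMk_right x)).integrable_of_hasCompactSupport
      (.intro hK (h₀ x))
  rw [integral_integral_swap (f := fun x y => F' (x, y))
    (integrable_prod_of_eq_zero_off_compact hF' hK h₀' a b), ← integral_sub (hslice b) (hslice a)]
  refine integral_congr_ae (.of_forall fun y => ?_)
  dsimp only
  rw [← integral_Ioc_eq_integral_Ioo, ← intervalIntegral.integral_of_le hab]
  exact intervalIntegral.integral_eq_sub_of_hasDerivAt (fun x _ => hderiv x y)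
    ((hF'.comp (Continuous.prodMk_left y)).intervalIntegrable a b)

end Integrals

section Transport

/-- The phase-space velocity, at `q = (η, v_η, v_φ, v_z)`, of the transport operator with curvature
coefficient `κ(η)` (equal to `1 / (1 - η)` in the Taylor–Couette geometry) and shear rate `a`
(equal to `α / η₁` there), so that `∂_t f + Tf` is the derivative of `f` along
`(1, transportField κ a)`. -/
def transportField (κ : ℝ → ℝ) (a : ℝ) (q : ℝ × ℝ³) : ℝ × ℝ³ :=
  (q.2.1, -κ q.1 * q.2.2.1 ^ 2, κ q.1 * q.2.1 * q.2.2.1 - a * q.2.1, 0)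

/-- The channel `0 < η < L` in the phase space of points `(η, v)`. -/
abbrev channel (L : ℝ) : Set (ℝ × ℝ³) := Ioo 0 L ×ˢ univ

/-- The conservative form `X s + (div X) s` of the transport operator with field
`X = transportField κ a`, whose divergence is `κ(η) v_η`. -/
noncomputable def conservativeTransport (κ : ℝ → ℝ) (a : ℝ) (s : ℝ × ℝ³ → ℝ) (q : ℝ × ℝ³) : ℝ :=
  fderiv ℝ s q (transportField κ a q) + κ q.1 * q.2.1 * s q

/-- The total flux of `s`, transported with velocity `v_η`, out of the channel `0 < η < L`. -/
noncomputable def boundaryFlux (L : ℝ) (s : ℝ × ℝ³ → ℝ) : ℝ :=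
  (∫ v, v.1 * s (L, v)) - ∫ v, v.1 * s (0, v)

variable {κ : ℝ → ℝ} {a L : ℝ} {s : ℝ × ℝ³ → ℝ}

lemma fderiv_transportField_eq (f : ℝ × ℝ × ℝ³ → ℝ) (t : ℝ) (q : ℝ × ℝ³) :
    fderiv ℝ f (t, q) (1, transportField κ a q) =
      fderiv ℝ f (t, q) (1, 0, 0, 0, 0) + q.2.1 * fderiv ℝ f (t, q) (0, 1, 0, 0, 0)
        - κ q.1 * (q.2.2.1 ^ 2 * fderiv ℝ f (t, q) (0, 0, 1, 0, 0)
          - q.2.1 * q.2.2.1 * fderiv ℝ f (t, q) (0, 0, 0, 1, 0))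
        - a * q.2.1 * fderiv ℝ f (t, q) (0, 0, 0, 1, 0) := by
  have hbasis : ((1, transportField κ a q) : ℝ × ℝ × ℝ³) =
      (1, 0, 0, 0, 0) + q.2.1 • (0, 1, 0, 0, 0) + (-κ q.1 * q.2.2.1 ^ 2) • (0, 0, 1, 0, 0)
        + (κ q.1 * q.2.1 * q.2.2.1 - a * q.2.1) • (0, 0, 0, 1, 0) := by
    ext <;> simp [transportField]
  simp only [hbasis, map_add, map_smul, smul_eq_mul]
  ring

lemma continuous_uncurry_conservativeTransport (hκ : Continuous κ) (hs : ContDiff ℝ 1 s) :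
    Continuous fun p : ℝ × ℝ × ℝ³ => conservativeTransport κ p.1 s p.2 := by
  have hs₀ := hs.continuous
  unfold conservativeTransport transportField
  fun_prop

lemma continuous_conservativeTransport (hκ : Continuous κ) (hs : ContDiff ℝ 1 s) :
    Continuous (conservativeTransport κ a s) :=
  (continuous_uncurry_conservativeTransport hκ hs).comp (Continuous.prodMk_right a)

lemma conservativeTransport_of_notMem_tsupport {q : ℝ × ℝ³} (hq : q ∉ tsupport s) :
    conservativeTransport κ a s q = 0 := by
  simp [conservativeTransport, fderiv_of_notMem_tsupport ℝ hq, image_eq_zero_of_notMem_tsupport hq]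

lemma hasCompactSupport_conservativeTransport (hs : HasCompactSupport s) :
    HasCompactSupport (conservativeTransport κ a s) :=
  .intro hs fun _ => conservativeTransport_of_notMem_tsupport

lemma exists_abs_conservativeTransport_le (hκ : Continuous κ) (hs : ContDiff ℝ 1 s)
    (hsc : HasCompactSupport s) (A : ℝ) :
    ∃ C > 0, ∀ a, |a| ≤ A → ∀ q, |conservativeTransport κ a s q| ≤ C := by
  obtain ⟨C, hC⟩ := ((isCompact_Icc (a := -A) (b := A)).prod hsc).exists_bound_of_continuousOn
    (continuous_uncurry_conservativeTransport hκ hs).continuousOn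
  refine ⟨max C 1, by positivity, fun a ha q => ?_⟩
  by_cases hq : q ∈ tsupport s
  · exact (hC (a, q) ⟨abs_le.1 ha, hq⟩).trans (le_max_left C 1)
  · rw [conservativeTransport_of_notMem_tsupport hq, abs_zero]
    positivity

lemma integral_fderiv_transportField_snd_add_eq_zero (κ : ℝ → ℝ) (a η : ℝ) {u : ℝ³ → ℝ}
    (hu : ContDiff ℝ 1 u) (huc : HasCompactSupport u) :
    ∫ v, (fderiv ℝ u v (transportField κ a (η, v)).2 + κ η * v.1 * u v) = 0 := by
  have : (volume : Measure (ℝ × ℝ)).IsAddHaarMeasure := Measure.prod.instIsAddHaarMeasure _ _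
  have : (volume : Measure ℝ³).IsAddHaarMeasure := Measure.prod.instIsAddHaarMeasure _ _
  have hu₀ := hu.continuous
  have deriv_η : ∀ v : ℝ³, HasLineDerivAt ℝ (fun v : ℝ³ => -κ η * v.2.1 ^ 2) 0 v (1, 0, 0) :=
    fun v => by simpa [HasLineDerivAt] using hasDerivAt_const (0 : ℝ) (-(κ η * v.2.1 ^ 2))
  have deriv_φ : ∀ v : ℝ³, HasLineDerivAt ℝ (fun v : ℝ³ => κ η * v.1 * v.2.1 - a * v.1)
      (κ η * v.1) v (0, 1, 0) := fun v => by
    simpa [HasLineDerivAt] using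
      (((hasDerivAt_id (0 : ℝ)).const_add v.2.1).const_mul (κ η * v.1)).sub_const (a * v.1)
  have parts_η := integral_mul_fderiv_add_lineDeriv_mul_eq_zero (μ := volume) (by fun_prop)
    continuous_const deriv_η hu huc
  have parts_φ := integral_mul_fderiv_add_lineDeriv_mul_eq_zero (μ := volume) (by fun_prop)
    (by fun_prop) deriv_φ hu huc
  have hsplit : ∀ v, fderiv ℝ u v (transportField κ a (η, v)).2 + κ η * v.1 * u v =
      (-κ η * v.2.1 ^ 2 * fderiv ℝ u v (1, 0, 0) + 0 * u v)
        + ((κ η * v.1 * v.2.1 - a * v.1) * fderiv ℝ u v (0, 1, 0) + κ η * v.1 * u v) := fun v => by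
    have hbasis : (transportField κ a (η, v)).2 = (-κ η * v.2.1 ^ 2) • (1, 0, 0)
        + (κ η * v.1 * v.2.1 - a * v.1) • (0, 1, 0) := by
      ext <;> simp [transportField]
    simp only [hbasis, map_add, map_smul, smul_eq_mul]
    ring
  simp only [hsplit]
  rw [integral_add, parts_η, parts_φ, add_zero]
  · exact Continuous.integrable_of_hasCompactSupport (by fun_prop)
      ((huc.fderiv_apply ℝ _).mul_left.add huc.mul_left)
  · exact Continuous.integrable_of_hasCompactSupport (by fun_prop)
      ((huc.fderiv_apply ℝ _).mul_left.add huc.mul_left)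

lemma conservativeTransport_sub_eq (hs : Differentiable ℝ s) (η : ℝ) (v : ℝ³) :
    conservativeTransport κ a s (η, v) - v.1 * fderiv ℝ s (η, v) (1, 0) =
      fderiv ℝ (fun v => s (η, v)) v (transportField κ a (η, v)).2 + κ η * v.1 * s (η, v) := by
  have hfield : transportField κ a (η, v) = v.1 • (1, 0) + (0, (transportField κ a (η, v)).2) := by
    ext <;> simp [transportField]
  have hderiv := congrArg (fderiv ℝ s (η, v)) hfield
  rw [map_add, map_smul, smul_eq_mul] at hderiv
  rw [conservativeTransport, hderiv, fderiv_comp_prodMk_apply (hs (η, v))]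
  ring

lemma integral_velocity_conservativeTransport (hκ : Continuous κ) (hs : ContDiff ℝ 1 s)
    (hsc : HasCompactSupport s) (η : ℝ) :
    ∫ v, conservativeTransport κ a s (η, v) = ∫ v : ℝ³, v.1 * fderiv ℝ s (η, v) (1, 0) := by
  rw [← sub_eq_zero, ← integral_sub]
  · simp only [conservativeTransport_sub_eq (hs.differentiable one_ne_zero)]
    exact integral_fderiv_transportField_snd_add_eq_zero κ a η (by fun_prop)
      (hasCompactSupport_comp_prodMk hsc η)
  · exact ((continuous_conservativeTransport hκ hs).comp
      (Continuous.prodMk_right η)).integrable_of_hasCompactSupport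
        (hasCompactSupport_comp_prodMk (hasCompactSupport_conservativeTransport hsc) η)
  · exact Continuous.integrable_of_hasCompactSupport (by fun_prop)
      (hasCompactSupport_comp_prodMk (hsc.fderiv_apply ℝ (1, 0)) η).mul_left

lemma integral_conservativeTransport (hκ : Continuous κ) (hL : 0 ≤ L) (hs : ContDiff ℝ 1 s)
    (hsc : HasCompactSupport s) :
    ∫ q in channel L, conservativeTransport κ a s q = boundaryFlux L s := by
  have hs₀ := hs.continuous
  have hint : Integrable (conservativeTransport κ a s) :=
    (continuous_conservativeTransport hκ hs).integrable_of_hasCompactSupport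
      (hasCompactSupport_conservativeTransport hsc)
  rw [setIntegral_prod_volume hint.integrableOn]
  simp only [setIntegral_univ, integral_velocity_conservativeTransport hκ hs hsc]
  exact integral_Ioo_integral_deriv_eq_sub (ν := volume) (F := fun p => p.2.1 * s p)
    (F' := fun p => p.2.1 * fderiv ℝ s p (1, 0)) (by fun_prop) (by fun_prop)
    (fun η v => (hasDerivAt_comp_prodMk (hs.differentiable one_ne_zero (η, v))).const_mul v.1)
    (hsc.isCompact.image continuous_snd)
    (fun η v hv => by
      rw [image_eq_zero_of_notMem_tsupport fun h => hv ⟨_, h, rfl⟩, mul_zero]) hL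


variable {w : ℝ × ℝ × ℝ³ → ℝ} {K : Set (ℝ × ℝ³)} {T : ℝ}

lemma fderiv_add_eq_fderiv_add_conservativeTransport (hw : Differentiable ℝ w) (t : ℝ)
    (q : ℝ × ℝ³) :
    fderiv ℝ w (t, q) (1, transportField κ a q) + κ q.1 * q.2.1 * w (t, q) =
      fderiv ℝ w (t, q) (1, 0) + conservativeTransport κ a (fun q => w (t, q)) q := by
  rw [conservativeTransport, fderiv_comp_prodMk_apply (hw (t, q)), ← add_assoc, ← map_add,
    Prod.mk_add_mk, add_zero, zero_add]

lemma continuous_conservativeTransport_slices (hκ : Continuous κ) (hw : ContDiff ℝ 1 w) :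
    Continuous fun p : ℝ × ℝ × ℝ³ => conservativeTransport κ a (fun q => w (p.1, q)) p.2 := by
  have hw₀ := hw.continuous
  have hslice : ∀ p : ℝ × ℝ × ℝ³, conservativeTransport κ a (fun q => w (p.1, q)) p.2 =
      fderiv ℝ w p (0, transportField κ a p.2) + κ p.2.1 * p.2.2.1 * w p := fun p => by
    rw [conservativeTransport, fderiv_comp_prodMk_apply (hw.differentiable one_ne_zero p)]
  simp only [hslice, transportField]
  fun_prop

lemma integrable_conservativeTransport_slices (hκ : Continuous κ) (hw : ContDiff ℝ 1 w)
    (hK : IsCompact K) (h₀ : ∀ t, ∀ q ∉ K, w (t, q) = 0) (a L T : ℝ) :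
    Integrable (fun p : ℝ × ℝ × ℝ³ => conservativeTransport κ a (fun q => w (p.1, q)) p.2)
      ((volume.restrict (Ioo 0 T)).prod (volume.restrict (channel L))) :=
  integrable_prod_of_eq_zero_off_compact (continuous_conservativeTransport_slices hκ hw) hK
    (fun t _ hq => conservativeTransport_of_notMem_tsupport fun h =>
      hq (closure_minimal (Function.support_subset_iff'.2 (h₀ t)) hK.isClosed h)) 0 T

lemma integrableOn_boundaryFlux (hL : 0 ≤ L) (hw : ContDiff ℝ 1 w) (hK : IsCompact K)
    (h₀ : ∀ t, ∀ q ∉ K, w (t, q) = 0) (T : ℝ) :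
    IntegrableOn (fun t => boundaryFlux L fun q => w (t, q)) (Ioo 0 T) := by
  have hint := (integrable_conservativeTransport_slices (κ := 0) continuous_const hw hK h₀ 0 L
    T).integral_prod_left
  refine hint.congr (.of_forall fun t => ?_)
  exact integral_conservativeTransport continuous_const hL
    (hw.comp (contDiff_prodMk_right t)) (.intro hK (h₀ t))

lemma integrable_fderiv_time (hw : ContDiff ℝ 1 w) (hK : IsCompact K)
    (h₀ : ∀ t, ∀ q ∉ K, w (t, q) = 0) (L T : ℝ) :
    Integrable (fun p => fderiv ℝ w p (1, 0))
      ((volume.restrict (Ioo 0 T)).prod (volume.restrict (channel L))) :=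
  integrable_prod_of_eq_zero_off_compact
    ((hw.continuous_fderiv one_ne_zero).clm_apply continuous_const) hK
    (fun t q hq => (hasDerivAt_comp_prodMk (hw.differentiable one_ne_zero (t, q))).unique
      (by simpa only [h₀ _ q hq] using hasDerivAt_const t (0 : ℝ))) 0 T

lemma integrableOn_transport (hκ : Continuous κ) (hw : ContDiff ℝ 1 w) (hK : IsCompact K)
    (h₀ : ∀ t, ∀ q ∉ K, w (t, q) = 0) (a L T : ℝ) :
    IntegrableOn (fun p => fderiv ℝ w p (1, transportField κ a p.2) + κ p.2.1 * p.2.2.1 * w p)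
      (Ioo 0 T ×ˢ channel L) := by
  rw [IntegrableOn, Measure.volume_eq_prod, ← Measure.prod_restrict]
  exact ((integrable_fderiv_time hw hK h₀ L T).add
    (integrable_conservativeTransport_slices hκ hw hK h₀ a L T)).congr <| .of_forall fun p =>
      (fderiv_add_eq_fderiv_add_conservativeTransport (hw.differentiable one_ne_zero) p.1 p.2).symm

lemma integral_transport_eq_boundaryFlux (hκ : Continuous κ) (hL : 0 ≤ L) (hT : 0 ≤ T)
    (hw : ContDiff ℝ 1 w) (hK : IsCompact K) (h₀ : ∀ t, ∀ q ∉ K, w (t, q) = 0) :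
    ∫ p in Ioo 0 T ×ˢ channel L,
        (fderiv ℝ w p (1, transportField κ a p.2) + κ p.2.1 * p.2.2.1 * w p) =
      (∫ q in channel L, w (T, q)) - (∫ q in channel L, w (0, q))
        + ∫ t in Ioo 0 T, boundaryFlux L fun q => w (t, q) := by
  have hdiff := hw.differentiable one_ne_zero
  have htime : ∫ t in Ioo 0 T, ∫ q in channel L, fderiv ℝ w (t, q) (1, 0) =
      (∫ q in channel L, w (T, q)) - ∫ q in channel L, w (0, q) :=
    integral_Ioo_integral_deriv_eq_sub hw.continuous
      ((hw.continuous_fderiv one_ne_zero).clm_apply continuous_const)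
      (fun t q => hasDerivAt_comp_prodMk (hdiff (t, q))) hK h₀ hT
  have hspace : ∀ t, ∫ q in channel L, conservativeTransport κ a (fun q => w (t, q)) q =
      boundaryFlux L fun q => w (t, q) := fun t =>
    integral_conservativeTransport hκ hL (hw.comp (contDiff_prodMk_right t)) (.intro hK (h₀ t))
  rw [setIntegral_prod_volume (integrableOn_transport hκ hw hK h₀ a L T)]
  simp only [fderiv_add_eq_fderiv_add_conservativeTransport hdiff]
  rw [integral_integral_add (integrable_fderiv_time hw hK h₀ L T)
    (integrable_conservativeTransport_slices hκ hw hK h₀ a L T), htime]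
  simp only [hspace]

lemma fderiv_mul_transportField_add_eq (hs : Differentiable ℝ s) {g : ℝ × ℝ × ℝ³ → ℝ}
    (hg : Differentiable ℝ g) (t : ℝ) (q : ℝ × ℝ³) :
    fderiv ℝ (fun p => s p.2 * g p) (t, q) (1, transportField κ a q)
        + κ q.1 * q.2.1 * (s q * g (t, q)) =
      s q * fderiv ℝ g (t, q) (1, transportField κ a q)
        + g (t, q) * conservativeTransport κ a s q := by
  have hprod : HasFDerivAt (fun p : ℝ × ℝ × ℝ³ => s p.2 * g p) _ (t, q) :=
    ((hs q).hasFDerivAt.comp (t, q) hasFDerivAt_snd).mul (hg (t, q)).hasFDerivAt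
  rw [hprod.fderiv, conservativeTransport]
  simp only [add_apply, smul_apply, ContinuousLinearMap.comp_apply,
    ContinuousLinearMap.coe_snd', smul_eq_mul]
  ring

end Transport

section OutgoingCutoff

/-- A `C¹` compactly supported weight on phase space which equals `1` at the outgoing boundary
velocities `v` with `|v_η| ≥ τ` and `‖v‖ ≤ R`, and which vanishes at every incoming boundary
velocity (expressed through the sign of `v_η ψ` on each wall). -/
structure IsOutgoingCutoff (L τ R : ℝ) (ψ : ℝ × ℝ³ → ℝ) : Prop where
  contDiff : ContDiff ℝ 1 ψ
  hasCompactSupport : HasCompactSupport ψ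
  mem_Icc : ∀ q : ℝ × ℝ³, q.1 ∈ Icc 0 L → ψ q ∈ Icc 0 1
  nonneg_right : ∀ v : ℝ³, 0 ≤ v.1 * ψ (L, v)
  nonpos_left : ∀ v : ℝ³, v.1 * ψ (0, v) ≤ 0
  eq_one_right : ∀ v ∈ Metric.closedBall (0 : ℝ³) R, τ ≤ v.1 → ψ (L, v) = 1
  eq_one_left : ∀ v ∈ Metric.closedBall (0 : ℝ³) R, v.1 ≤ -τ → ψ (0, v) = 1

variable {L τ R : ℝ}

lemma exists_isOutgoingCutoff (hL : 0 < L) (hτ : 0 < τ) (R : ℝ) :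
    ∃ ψ, IsOutgoingCutoff L τ R ψ := by
  let χ : ContDiffBump (0 : ℝ × ℝ³) :=
    ⟨max L R, max L R + 1, lt_max_of_lt_left hL, lt_add_one _⟩
  let S := Real.smoothTransition
  have hS : ContDiff ℝ 1 S := Real.smoothTransition.contDiff
  have hS₀ : ∀ x, 0 ≤ S x := Real.smoothTransition.nonneg
  have hS₁ : ∀ x, S x ≤ 1 := Real.smoothTransition.le_one
  have hsign : ∀ x, 0 ≤ x * S (x / τ) := fun x => by
    rcases le_total x 0 with hx | hx
    · rw [show S (x / τ) = 0 from
        Real.smoothTransition.zero_of_nonpos (div_nonpos_of_nonpos_of_nonneg hx hτ.le), mul_zero]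
    · exact mul_nonneg hx (hS₀ _)
  have hS_one : ∀ x, τ ≤ x → S (x / τ) = 1 := fun x hx =>
    Real.smoothTransition.one_of_one_le ((one_le_div hτ).2 hx)
  have hχ_one : ∀ x ∈ Icc 0 L, ∀ v ∈ Metric.closedBall (0 : ℝ³) R, χ (x, v) = 1 :=
    fun x hx v hv => χ.one_of_mem_closedBall <| mem_closedBall_zero_iff.2 <|
      max_le_max (by rw [Real.norm_of_nonneg hx.1]; exact hx.2) (mem_closedBall_zero_iff.1 hv)
  refine ⟨fun q => χ q * (q.1 / L * S (q.2.1 / τ) + (1 - q.1 / L) * S (-q.2.1 / τ)),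
    ?_, χ.hasCompactSupport.mul_right, fun q hq => ?_, fun v => ?_, fun v => ?_,
    fun v hv hvτ => ?_, fun v hv hvτ => ?_⟩
  · have hχ : ContDiff ℝ 1 χ := χ.contDiff
    fun_prop
  · have hq₀ : 0 ≤ q.1 / L := div_nonneg hq.1 hL.le
    have hq₁ : 0 ≤ 1 - q.1 / L := sub_nonneg.2 (div_le_one_of_le₀ hq.2 hL.le)
    have hmean : q.1 / L * S (q.2.1 / τ) + (1 - q.1 / L) * S (-q.2.1 / τ) ∈ Icc (0 : ℝ) 1 :=
      convex_Icc 0 1 ⟨hS₀ _, hS₁ _⟩ ⟨hS₀ _, hS₁ _⟩ hq₀ hq₁ (add_sub_cancel _ _)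
    exact ⟨mul_nonneg χ.nonneg hmean.1, mul_le_one₀ χ.le_one hmean.1 hmean.2⟩
  · simpa [hL.ne', mul_left_comm] using mul_nonneg (χ.nonneg (x := (L, v))) (hsign v.1)
  · simpa [mul_left_comm] using mul_nonneg (χ.nonneg (x := (0, v))) (hsign (-v.1))
  · simp [hL.ne', hχ_one L (right_mem_Icc.2 hL.le) v hv, hS_one v.1 hvτ]
  · simp [hχ_one 0 (left_mem_Icc.2 hL.le) v hv, hS_one (-v.1) (le_neg_of_le_neg hvτ)]

namespace IsOutgoingCutoff

variable {ψ : ℝ × ℝ³ → ℝ}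

lemma integrable_wall (hψ : IsOutgoingCutoff L τ R ψ) {h : ℝ × ℝ³ → ℝ} (hh : Continuous h)
    (x : ℝ) : Integrable fun v : ℝ³ => v.1 * (ψ (x, v) * h (x, v)) := by
  have hψ₀ := hψ.contDiff.continuous
  exact Continuous.integrable_of_hasCompactSupport (by fun_prop)
    (hasCompactSupport_comp_prodMk hψ.hasCompactSupport x).mul_right.mul_left

lemma setIntegral_add_setIntegral_le_boundaryFlux (hψ : IsOutgoingCutoff L τ R ψ)
    {f h : ℝ × ℝ³ → ℝ} (hf : Continuous f) (hh : Continuous h) (hfh : ∀ q, |f q| ≤ h q)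
    {S₁ S₀ : Set ℝ³} (hS₁ : S₁ ⊆ {v ∈ Metric.closedBall 0 R | τ ≤ v.1})
    (hS₀ : S₀ ⊆ {v ∈ Metric.closedBall 0 R | v.1 ≤ -τ}) (hτ : 0 < τ) :
    (∫ v in S₁, |f (L, v)| * |v.1|) + (∫ v in S₀, |f (0, v)| * |v.1|) ≤
      boundaryFlux L fun q => ψ q * h q := by
  have hψ₀ := hψ.contDiff.continuous
  have hh₀ : ∀ q, 0 ≤ h q := fun q => (abs_nonneg _).trans (hfh q)
  have hright : ∫ v in S₁, |f (L, v)| * |v.1| ≤ ∫ v : ℝ³, v.1 * (ψ (L, v) * h (L, v)) := by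
    refine setIntegral_le_integral_of_le_on (by fun_prop) (by fun_prop) (hψ.integrable_wall hh L)
      (fun v => by positivity) (fun v => ?_) fun v hv => ?_
    · rw [← mul_assoc]
      exact mul_nonneg (hψ.nonneg_right v) (hh₀ _)
    · rw [hψ.eq_one_right v (hS₁ hv).1 (hS₁ hv).2, one_mul, mul_comm,
        abs_of_pos (hτ.trans_le (hS₁ hv).2)]
      gcongr
      exacts [(hτ.trans_le (hS₁ hv).2).le, hfh _]
  have hleft : ∫ v in S₀, |f (0, v)| * |v.1| ≤ ∫ v : ℝ³, -(v.1 * (ψ (0, v) * h (0, v))) := by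
    refine setIntegral_le_integral_of_le_on (by fun_prop) (by fun_prop)
      (hψ.integrable_wall hh 0).fun_neg (fun v => by positivity) (fun v => ?_) fun v hv => ?_
    · rw [← mul_assoc, ← neg_mul]
      exact mul_nonneg (neg_nonneg.2 (hψ.nonpos_left v)) (hh₀ _)
    · have hv₁ : 0 ≤ -v.1 := hτ.le.trans (le_neg_of_le_neg (hS₀ hv).2)
      rw [hψ.eq_one_left v (hS₀ hv).1 (hS₀ hv).2, one_mul, mul_comm, ← neg_mul, ← abs_neg v.1,
        abs_of_nonneg hv₁]
      gcongr
      exact hfh _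
  rw [integral_neg] at hleft
  rw [boundaryFlux]
  linarith

lemma boundaryFlux_mul_add_const (hψ : IsOutgoingCutoff L τ R ψ) {g : ℝ × ℝ³ → ℝ}
    (hg : Continuous g) (ε : ℝ) : boundaryFlux L (fun q => ψ q * (g q + ε)) =
      boundaryFlux L (fun q => ψ q * g q) + ε * boundaryFlux L ψ := by
  have hwall : ∀ x, ∫ v : ℝ³, v.1 * (ψ (x, v) * (g (x, v) + ε)) =
      (∫ v : ℝ³, v.1 * (ψ (x, v) * g (x, v))) + ε * ∫ v : ℝ³, v.1 * ψ (x, v) := fun x => by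
    rw [← integral_const_mul, ← integral_add (hψ.integrable_wall hg x)]
    · congr with v
      ring
    · simpa only [mul_one] using
        (hψ.integrable_wall (h := fun _ => 1) continuous_const x).const_mul ε
  simp only [boundaryFlux, hwall]
  ring

variable {κ : ℝ → ℝ} {a T ε C : ℝ} {f D : ℝ × ℝ × ℝ³ → ℝ}

lemma fderiv_mul_regularizedAbs_add_le (hψ : IsOutgoingCutoff L τ R ψ) (hε : 0 < ε)
    (hf : ContDiff ℝ 1 f) (hC : ∀ q, |conservativeTransport κ a ψ q| ≤ C) (t : ℝ) {q : ℝ × ℝ³}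
    (hq : q ∈ channel L) :
    fderiv ℝ (fun p => ψ p.2 * regularizedAbs ε (f p)) (t, q) (1, transportField κ a q)
        + κ q.1 * q.2.1 * (ψ q * regularizedAbs ε (f (t, q))) ≤
      |fderiv ℝ f (t, q) (1, transportField κ a q)| + C * |f (t, q)| := by
  obtain ⟨hψ₀, hψ₁⟩ := hψ.mem_Icc q (Ioo_subset_Icc_self hq.1)
  set X := transportField κ a q
  have hg : Differentiable ℝ fun p => regularizedAbs ε (f p) :=
    ((contDiff_regularizedAbs hε).comp hf).differentiable one_ne_zero
  have htransport : ψ q * fderiv ℝ (fun p => regularizedAbs ε (f p)) (t, q) (1, X) ≤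
      |fderiv ℝ f (t, q) (1, X)| :=
    calc _ ≤ ψ q * |fderiv ℝ (fun p => regularizedAbs ε (f p)) (t, q) (1, X)| := by
          gcongr
          exact le_abs_self _
      _ ≤ |fderiv ℝ (fun p => regularizedAbs ε (f p)) (t, q) (1, X)| :=
          mul_le_of_le_one_left (abs_nonneg _) hψ₁
      _ ≤ _ := abs_fderiv_regularizedAbs_comp_le hε (hf.differentiable one_ne_zero (t, q)) (1, X)
  have hcommutator : regularizedAbs ε (f (t, q)) * conservativeTransport κ a ψ q ≤
      C * |f (t, q)| :=
    calc _ ≤ |f (t, q)| * C := (le_abs_self _).trans <| by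
          rw [abs_mul, abs_of_nonneg (regularizedAbs_nonneg _)]
          gcongr
          exacts [regularizedAbs_le_abs hε.le _, hC q]
      _ = _ := mul_comm _ _
  rw [fderiv_mul_transportField_add_eq (hψ.contDiff.differentiable one_ne_zero) hg]
  exact add_le_add htransport hcommutator

lemma integral_boundaryFlux_le (hψ : IsOutgoingCutoff L τ R ψ) (hκ : Continuous κ) (hL : 0 ≤ L)
    (hT : 0 ≤ T) (hε : 0 < ε) (hf : ContDiff ℝ 1 f)
    (hC : ∀ q, |conservativeTransport κ a ψ q| ≤ C)
    (hD : ∀ p ∈ Ioo 0 T ×ˢ channel L, D p = fderiv ℝ f p (1, transportField κ a p.2))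
    (hf_int : IntegrableOn f (Ioo 0 T ×ˢ channel L))
    (hD_int : IntegrableOn D (Ioo 0 T ×ˢ channel L))
    (hf₀_int : IntegrableOn (fun q => f (0, q)) (channel L)) :
    ∫ t in Ioo 0 T, boundaryFlux L (fun q => ψ q * regularizedAbs ε (f (t, q))) ≤
      (∫ q in channel L, |f (0, q)|) + ∫ p in Ioo 0 T ×ˢ channel L, (|D p| + C * |f p|) := by
  set w : ℝ × ℝ × ℝ³ → ℝ := fun p => ψ p.2 * regularizedAbs ε (f p)
  have hchannel : MeasurableSet (channel L) := measurableSet_Ioo.prod .univ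
  have hw : ContDiff ℝ 1 w :=
    (hψ.contDiff.comp contDiff_snd).mul ((contDiff_regularizedAbs hε).comp hf)
  have hw₀ : ∀ t, ∀ q ∉ tsupport ψ, w (t, q) = 0 := fun t q hq => by
    simp only [w, image_eq_zero_of_notMem_tsupport hq, zero_mul]
  have hgreen := integral_transport_eq_boundaryFlux (a := a) hκ hL hT hw hψ.hasCompactSupport hw₀
  have hbulk : ∫ p in Ioo 0 T ×ˢ channel L,
      (fderiv ℝ w p (1, transportField κ a p.2) + κ p.2.1 * p.2.2.1 * w p) ≤
        ∫ p in Ioo 0 T ×ˢ channel L, (|D p| + C * |f p|) := by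
    refine setIntegral_mono_on
      (integrableOn_transport hκ hw hψ.hasCompactSupport hw₀ a L T)
      (hD_int.abs.add (hf_int.abs.const_mul C)) (measurableSet_Ioo.prod hchannel) fun p hp => ?_
    rw [hD p hp]
    exact hψ.fderiv_mul_regularizedAbs_add_le hε hf hC p.1 hp.2
  have hψ_mem : ∀ q ∈ channel L, ψ q ∈ Icc 0 1 := fun q hq =>
    hψ.mem_Icc q (Ioo_subset_Icc_self hq.1)
  have hfinal : 0 ≤ ∫ q in channel L, w (T, q) := setIntegral_nonneg hchannel fun q hq =>
    mul_nonneg (hψ_mem q hq).1 (regularizedAbs_nonneg _)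
  have hinitial : ∫ q in channel L, w (0, q) ≤ ∫ q in channel L, |f (0, q)| := by
    refine integral_mono_of_nonneg ?_ hf₀_int.abs ?_ <;>
      refine ae_restrict_of_forall_mem hchannel fun q hq => ?_
    · exact mul_nonneg (hψ_mem q hq).1 (regularizedAbs_nonneg _)
    · exact (mul_le_of_le_one_left (regularizedAbs_nonneg _) (hψ_mem q hq).2).trans
        (regularizedAbs_le_abs hε.le _)
  linarith

lemma integral_trace_le (hψ : IsOutgoingCutoff L τ R ψ) (hκ : Continuous κ) (hL : 0 ≤ L)
    (hτ : 0 < τ) (hT : 0 ≤ T) (hf : ContDiff ℝ 1 f)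
    (hC : ∀ q, |conservativeTransport κ a ψ q| ≤ C)
    (hD : ∀ p ∈ Ioo 0 T ×ˢ channel L, D p = fderiv ℝ f p (1, transportField κ a p.2))
    (hf_int : IntegrableOn f (Ioo 0 T ×ˢ channel L))
    (hD_int : IntegrableOn D (Ioo 0 T ×ˢ channel L))
    (hf₀_int : IntegrableOn (fun q => f (0, q)) (channel L))
    {S₁ S₀ : Set ℝ³} (hS₁ : S₁ ⊆ {v ∈ Metric.closedBall 0 R | τ ≤ v.1})
    (hS₀ : S₀ ⊆ {v ∈ Metric.closedBall 0 R | v.1 ≤ -τ}) :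
    ∫ t in Ioo 0 T,
        ((∫ v in S₁, |f (t, L, v)| * |v.1|) + ∫ v in S₀, |f (t, 0, v)| * |v.1|) ≤
      (∫ q in channel L, |f (0, q)|) + ∫ p in Ioo 0 T ×ˢ channel L, (|D p| + C * |f p|) := by
  refine le_of_forall_pos_le_add_mul (c := T * boundaryFlux L ψ) fun ε hε => ?_
  have hflux_int : IntegrableOn
      (fun t => boundaryFlux L fun q => ψ q * regularizedAbs ε (f (t, q))) (Ioo 0 T) :=
    integrableOn_boundaryFlux (w := fun p => ψ p.2 * regularizedAbs ε (f p)) hL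
      ((hψ.contDiff.comp contDiff_snd).mul ((contDiff_regularizedAbs hε).comp hf))
      hψ.hasCompactSupport
      (fun t q hq => by simp only [image_eq_zero_of_notMem_tsupport hq, zero_mul]) T
  have hconst_int : IntegrableOn (fun _ : ℝ => ε * boundaryFlux L ψ) (Ioo 0 T) :=
    integrableOn_const measure_Ioo_lt_top.ne
  have htrace : ∀ t, (∫ v in S₁, |f (t, L, v)| * |v.1|) + (∫ v in S₀, |f (t, 0, v)| * |v.1|) ≤
      boundaryFlux L (fun q => ψ q * regularizedAbs ε (f (t, q))) + ε * boundaryFlux L ψ :=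
    fun t => by
      have hft : Continuous fun q => f (t, q) := hf.continuous.comp (Continuous.prodMk_right t)
      have hgt : Continuous fun q => regularizedAbs ε (f (t, q)) :=
        (contDiff_regularizedAbs hε (n := 0)).continuous.comp hft
      rw [← hψ.boundaryFlux_mul_add_const hgt]
      exact hψ.setIntegral_add_setIntegral_le_boundaryFlux hft (hgt.add_const ε)
        (fun q => abs_le_regularizedAbs_add _) hS₁ hS₀ hτ
  calc _ ≤ ∫ t in Ioo 0 T, (boundaryFlux L (fun q => ψ q * regularizedAbs ε (f (t, q)))
          + ε * boundaryFlux L ψ) :=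
        integral_mono_of_nonneg (.of_forall fun t => by positivity) (hflux_int.add hconst_int)
          (.of_forall htrace)
    _ = (∫ t in Ioo 0 T, boundaryFlux L fun q => ψ q * regularizedAbs ε (f (t, q)))
          + ε * (T * boundaryFlux L ψ) := by
        rw [integral_add hflux_int hconst_int]
        simp [hT, mul_left_comm]
    _ ≤ _ := by
        gcongr
        exact hψ.integral_boundaryFlux_le hκ hL hT hε hf hC hD hf_int hD_int hf₀_int

end IsOutgoingCutoff

end OutgoingCutoff

theorem unsteady_trace_lemma_general {L τ : ℝ} (hL : 0 < L) (hτ : 0 < τ) (R A : ℝ) {κ : ℝ → ℝ}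
    (hκ : ContinuousOn κ (Icc 0 L)) :
    ∃ C > 0, ∀ a, |a| ≤ A → ∀ T, 0 ≤ T → ∀ f D : ℝ × ℝ × ℝ³ → ℝ, ContDiff ℝ 1 f →
      (∀ p ∈ Ioo 0 T ×ˢ channel L, D p = fderiv ℝ f p (1, transportField κ a p.2)) →
      IntegrableOn f (Ioo 0 T ×ˢ channel L) → IntegrableOn D (Ioo 0 T ×ˢ channel L) →
      IntegrableOn (fun q => f (0, q)) (channel L) →
      ∀ S₁ ⊆ {v : ℝ³ | v ∈ Metric.closedBall 0 R ∧ τ ≤ v.1},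
      ∀ S₀ ⊆ {v : ℝ³ | v ∈ Metric.closedBall 0 R ∧ v.1 ≤ -τ},
      ∫ t in Ioo 0 T,
          ((∫ v in S₁, |f (t, L, v)| * |v.1|) + ∫ v in S₀, |f (t, 0, v)| * |v.1|) ≤
        C * ((∫ q in channel L, |f (0, q)|) + (∫ t in Ioo 0 T, ∫ q in channel L, |f (t, q)|)
          + ∫ t in Ioo 0 T, ∫ q in channel L, |D (t, q)|) := by
  obtain ⟨ψ, hψ⟩ := exists_isOutgoingCutoff hL hτ R
  let κ' := IccExtend hL.le ((Icc 0 L).domRestrict κ)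
  have hκ' : Continuous κ' := hκ.domRestrict.Icc_extend'
  obtain ⟨C, hC_pos, hC⟩ :=
    exists_abs_conservativeTransport_le hκ' hψ.contDiff hψ.hasCompactSupport A
  refine ⟨max C 1, by positivity, fun a ha T hT f D hf hD hf_int hD_int hf₀_int S₁ hS₁ S₀ hS₀ => ?_⟩
  have hD' : ∀ p ∈ Ioo 0 T ×ˢ channel L, D p = fderiv ℝ f p (1, transportField κ' a p.2) :=
    fun p hp => by
      have hκp : κ' p.2.1 = κ p.2.1 := IccExtend_of_mem hL.le _ (Ioo_subset_Icc_self hp.2.1)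
      rw [hD p hp, transportField, transportField, hκp]
  have htrace := hψ.integral_trace_le hκ' hL.le hτ hT hf (hC a ha) hD' hf_int hD_int hf₀_int
    hS₁ hS₀
  rw [integral_add hD_int.abs (hf_int.abs.const_mul C), integral_const_mul] at htrace
  rw [← setIntegral_prod_volume hf_int.abs, ← setIntegral_prod_volume hD_int.abs]
  have hf₀_nonneg : 0 ≤ ∫ q in channel L, |f (0, q)| := integral_nonneg fun _ => abs_nonneg _
  have hf_nonneg : 0 ≤ ∫ p in Ioo 0 T ×ˢ channel L, |f p| := integral_nonneg fun _ => abs_nonneg _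
  have hD_nonneg : 0 ≤ ∫ p in Ioo 0 T ×ˢ channel L, |D p| := integral_nonneg fun _ => abs_nonneg _
  rw [mul_add, mul_add]
  linarith [le_mul_of_one_le_left hf₀_nonneg (le_max_right C 1),
    mul_le_mul_of_nonneg_right (le_max_left C 1) hf_nonneg,
    le_mul_of_one_le_left hD_nonneg (le_max_right C 1)]

lemma mem_closedBall_zero_of_sqrt_le {v : ℝ³} {r : ℝ}
    (hv : √(v.1 ^ 2 + v.2.1 ^ 2 + v.2.2 ^ 2) ≤ r) : v ∈ Metric.closedBall 0 r := by
  have hcoord : ∀ x, x ^ 2 ≤ v.1 ^ 2 + v.2.1 ^ 2 + v.2.2 ^ 2 → |x| ≤ r := fun x hx =>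
    (Real.abs_le_sqrt hx).trans hv
  rw [mem_closedBall_zero_iff, Prod.norm_def, Prod.norm_def]
  have := sq_nonneg v.1
  have := sq_nonneg v.2.1
  have := sq_nonneg v.2.2
  exact max_le (hcoord _ (by linarith)) (max_le (hcoord _ (by linarith)) (hcoord _ (by linarith)))

/-- **Time-dependent trace lemma.** For the Taylor–Couette transport operator with
geometric correction on the channel `(0,η₁) × ℝ³` (phase point
`p = (t, η, v_η, v_φ, v_z)`), the outgoing boundary trace, time-integrated over
`(0,T)` and away from grazing velocities, is controlled by
`‖f(0)‖_{L¹} + ∫₀^T ‖f(t)‖_{L¹} dt + ∫₀^T ‖(∂_t f + Tf)(t)‖_{L¹} dt`. -/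
theorem unsteady_trace_lemma
    (η₁ : ℝ) (hη₁ : 0 < η₁) (hη₁' : η₁ < 1)
    (τ : ℝ) (hτ : 0 < τ) (hτ' : τ < 1) :
    ∃ α₀, 0 < α₀ ∧ α₀ < 1 ∧ ∃ C > 0, ∀ α : ℝ, 0 < α → α < α₀ → ∀ T : ℝ, 0 < T →
      ∀ f : ℝ × ℝ × ℝ × ℝ × ℝ → ℝ, ContDiff ℝ 1 f →
      ∀ Df : ℝ × ℝ × ℝ × ℝ × ℝ → ℝ,
      (Df = fun p => fderiv ℝ f p (1, 0, 0, 0, 0)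
          + p.2.2.1 * fderiv ℝ f p (0, 1, 0, 0, 0)
          - 1 / (1 - p.2.1) * ((p.2.2.2.1) ^ 2 * fderiv ℝ f p (0, 0, 1, 0, 0)
              - p.2.2.1 * p.2.2.2.1 * fderiv ℝ f p (0, 0, 0, 1, 0))
          - α / η₁ * p.2.2.1 * fderiv ℝ f p (0, 0, 0, 1, 0)) →
      IntegrableOn f (Set.Ioo (0 : ℝ) T ×ˢ
          (Set.Ioo (0 : ℝ) η₁ ×ˢ (Set.univ : Set (ℝ × ℝ × ℝ)))) →
      IntegrableOn Df (Set.Ioo (0 : ℝ) T ×ˢ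
          (Set.Ioo (0 : ℝ) η₁ ×ˢ (Set.univ : Set (ℝ × ℝ × ℝ)))) →
      IntegrableOn (fun q : ℝ × ℝ × ℝ × ℝ => f (0, q))
          (Set.Ioo (0 : ℝ) η₁ ×ˢ (Set.univ : Set (ℝ × ℝ × ℝ))) →
      (∀ t ∈ Set.Icc (0 : ℝ) T,
          IntegrableOn (fun q : ℝ × ℝ × ℝ × ℝ => f (t, q))
            (Set.Ioo (0 : ℝ) η₁ ×ˢ (Set.univ : Set (ℝ × ℝ × ℝ)))
        ∧ IntegrableOn (fun q : ℝ × ℝ × ℝ × ℝ => Df (t, q))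
            (Set.Ioo (0 : ℝ) η₁ ×ˢ (Set.univ : Set (ℝ × ℝ × ℝ)))) →
      (∫ t in Set.Ioo (0 : ℝ) T,
          ((∫ v in {v : ℝ × ℝ × ℝ | τ ≤ v.1 ∧ τ ≤ |v.2.1| ∧
                Real.sqrt (v.1 ^ 2 + v.2.1 ^ 2 + v.2.2 ^ 2) ≤ 1 / τ},
              |f (t, η₁, v)| * |v.1|)
            + (∫ v in {v : ℝ × ℝ × ℝ | v.1 ≤ -τ ∧ τ ≤ |v.2.1| ∧
                Real.sqrt (v.1 ^ 2 + v.2.1 ^ 2 + v.2.2 ^ 2) ≤ 1 / τ},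
              |f (t, 0, v)| * |v.1|)))
      ≤ C * ((∫ q in Set.Ioo (0 : ℝ) η₁ ×ˢ (Set.univ : Set (ℝ × ℝ × ℝ)), |f (0, q)|)
          + (∫ t in Set.Ioo (0 : ℝ) T,
              (∫ q in Set.Ioo (0 : ℝ) η₁ ×ˢ (Set.univ : Set (ℝ × ℝ × ℝ)), |f (t, q)|))
          + (∫ t in Set.Ioo (0 : ℝ) T,
              (∫ q in Set.Ioo (0 : ℝ) η₁ ×ˢ (Set.univ : Set (ℝ × ℝ × ℝ)), |Df (t, q)|))) := by
  have hκ : ContinuousOn (fun η : ℝ => 1 / (1 - η)) (Icc 0 η₁) :=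
    continuousOn_const.div (by fun_prop) fun η hη => by linarith [hη.2]
  obtain ⟨C, hC_pos, hC⟩ := unsteady_trace_lemma_general hη₁ hτ (1 / τ) (1 / η₁) hκ
  refine ⟨1 / 2, by norm_num, by norm_num, C, hC_pos, fun α hα hα' T hT f hf Df hDf hf_int hDf_int
    hf₀_int _ => ?_⟩
  have hshear : |α / η₁| ≤ 1 / η₁ := by
    rw [abs_of_pos (by positivity)]
    gcongr
    linarith
  refine hC (α / η₁) hshear T hT.le f Df hf (fun p _ => ?_) hf_int hDf_int hf₀_int
    _ (fun v hv => ⟨mem_closedBall_zero_of_sqrt_le hv.2.2, hv.1⟩)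
    _ (fun v hv => ⟨mem_closedBall_zero_of_sqrt_le hv.2.2, hv.1⟩)
  rw [hDf]
  exact (fderiv_transportField_eq (κ := fun η => 1 / (1 - η)) f p.1 p.2).symm
end
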